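/- arXiv:math/0505176 — 5 statements merged into one kernel-verified Lean document; each statement's English description precedes it below -/
import Mathlib

section
/- Let E be a normed space and (g_n) a bounded sequence in E'. If no normalized block sequence of (g_n) converges pointwise to 0 on E (equivalently on the unit ball), then E contains an asymptotically isometric copy of ℓ¹(ℕ). (Assume Dependent Choices.) -/
open Filter


namespace HJ

/-- normalized disjointly supported sequences of finitely supported vectors -/
structure Blk where
  /-- the vectors -/
  u : ℕ → (ℕ →₀ ℝ)
  prop : (Pairwise fun m n => Disjoint (u m).support (u n).support) ∧
    ∀ n, ∑ i ∈ (u n).support, |u n i| = 1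

/-- `v` lies in the bipolar of the `N`-tail of `u`. -/
def Dom (u : ℕ → (ℕ →₀ ℝ)) (N : ℕ) (v : ℕ →₀ ℝ) : Prop :=
  ∀ (φ : (ℕ →₀ ℝ) →ₗ[ℝ] ℝ) (c : ℝ), (∀ i, N ≤ i → |φ (u i)| ≤ c) → |φ v| ≤ c

theorem Dom.mono {u : ℕ → (ℕ →₀ ℝ)} {N M : ℕ} {v : ℕ →₀ ℝ} (h : Dom u N v) (hM : M ≤ N) :
    Dom u M v := fun φ c hc => h φ c fun i hi => hc i (hM.trans hi)

instance : Preorder Blk where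
  le w u := ∀ N, ∀ᶠ m in atTop, Dom u.1 N (w.1 m)
  le_refl u N := by
    filter_upwards [eventually_ge_atTop N] with m hm φ c hc using hc m hm
  le_trans z w u hzw hwu N := by
    obtain ⟨M, hM⟩ := eventually_atTop.1 (hwu N)
    filter_upwards [hzw M] with m hm φ c hc
    exact hm φ c fun i hi => hM i hi φ c hc

theorem le_def (w u : Blk) : w ≤ u ↔ ∀ N, ∀ᶠ m in atTop, Dom u.1 N (w.1 m) := Iff.rfl

theorem eventually_disjoint (u : Blk) (A : Finset ℕ) :
    ∀ᶠ k in atTop, Disjoint A (u.1 k).support := by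
  have h : ∀ a ∈ A, ∀ᶠ k in atTop, a ∉ (u.1 k).support := by
    intro a _
    by_cases h : ∃ k, a ∈ (u.1 k).support
    · obtain ⟨k, hk⟩ := h
      filter_upwards [eventually_gt_atTop k] with m hm hma
      exact Finset.disjoint_left.1 (u.2.1 hm.ne) hk hma
    · push Not at h
      exact Eventually.of_forall h
  filter_upwards [(Finset.eventually_all A).2 h] with k hk
  exact Finset.disjoint_left.2 fun a ha => hk a ha

theorem exists_lower (u : ℕ → Blk) (hu : ∀ n, u (n+1) ≤ u n) : ∃ w, ∀ n, w ≤ u n := by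
  have hanti : Antitone u := antitone_nat_of_succ_le hu
  obtain ⟨f, hf, hr⟩ := exists_seq_of_forall_finset_exists
    (fun p : ℕ × ℕ => ∀ i ≤ p.1, Dom (u i).1 p.1 ((u p.1).1 p.2))
    (fun p q : ℕ × ℕ => p.1 < q.1 ∧ Disjoint ((u p.1).1 p.2).support ((u q.1).1 q.2).support) (by
      intro s _
      set n := s.sup Prod.fst + 1 with hn
      have h1 : ∀ᶠ k in atTop, ∀ i ∈ Finset.range (n+1), Dom (u i).1 n ((u n).1 k) :=
        (Finset.eventually_all _).2 fun i hi =>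
          hanti (Nat.lt_succ_iff.1 (Finset.mem_range.1 hi)) n
      have h2 := eventually_disjoint (u n) (s.biUnion fun p => ((u p.1).1 p.2).support)
      obtain ⟨k, hk1, hk2⟩ := (h1.and h2).exists
      refine ⟨(n, k), fun i hi => hk1 i (Finset.mem_range.2 (Nat.lt_succ_of_le hi)), ?_⟩
      intro p hp
      refine ⟨Nat.lt_succ_of_le (Finset.le_sup (f := Prod.fst) hp), ?_⟩
      exact (Finset.disjoint_biUnion_left _ _ _).1 hk2 p hp)
  have hmono : StrictMono fun m => (f m).1 := fun a b hab => (hr a b hab).1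
  refine ⟨⟨fun m => (u (f m).1).1 (f m).2, ?_, fun m => (u _).2.2 _⟩, ?_⟩
  · intro a b hab
    rcases lt_or_gt_of_ne hab with h | h
    · exact (hr a b h).2
    · exact (hr b a h).2.symm
  · intro i N
    filter_upwards [eventually_ge_atTop (max i N)] with m hm
    have : m ≤ (f m).1 := hmono.id_le m
    exact (hf m i (by omega)).mono (by omega)

theorem exists_min (ε : Blk → ℝ) (h0 : ∀ u, 0 ≤ ε u) (hmono : Monotone ε) (u0 : Blk) :
    ∃ u, ∀ z ≤ u, ε u ≤ ε z := by
  have step : ∀ (n : ℕ) (u : Blk), ∃ z ≤ u, ∀ z' ≤ u, ε z < ε z' + 1 / ((n:ℝ) + 1) := by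
    intro n u
    have hne : (ε '' {z | z ≤ u}).Nonempty := ⟨_, u, le_refl u, rfl⟩
    obtain ⟨_, ⟨z, hz, rfl⟩, hlt⟩ := exists_lt_of_csInf_lt hne
      (lt_add_of_pos_right (sInf (ε '' {z | z ≤ u})) (Nat.one_div_pos_of_nat (n := n) (α := ℝ)))
    refine ⟨z, hz, fun z' hz' => hlt.trans_le ?_⟩
    gcongr
    exact csInf_le ⟨0, by rintro _ ⟨y, _, rfl⟩; exact h0 y⟩ ⟨z', hz', rfl⟩
  choose F hF hF' using step
  let U : ℕ → Blk := fun n => Nat.rec u0 F n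
  obtain ⟨w, hw⟩ := exists_lower U (fun n => hF n (U n))
  refine ⟨w, fun z hz => ?_⟩
  have : ∀ n : ℕ, ε w ≤ ε z + 1 / ((n:ℝ) + 1) := fun n =>
    (hmono (hw (n+1))).trans (hF' n (U n) z (hz.trans (hw n))).le
  have ht : Tendsto (fun n : ℕ => ε z + 1 / ((n:ℝ) + 1)) atTop (nhds (ε z + 0)) :=
    tendsto_const_nhds.add tendsto_one_div_add_atTop_nhds_zero_nat
  rw [add_zero] at ht
  exact ge_of_tendsto' ht this

section
variable {E : Type*} [NormedAddCommGroup E] [NormedSpace ℝ E]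

/-- evaluation at `x` of the combination of the `g n` -/
noncomputable def T (g : ℕ → E →L[ℝ] ℝ) (x : E) : (ℕ →₀ ℝ) →ₗ[ℝ] ℝ :=
  Finsupp.linearCombination ℝ fun n => g n x

theorem T_eq (g : ℕ → E →L[ℝ] ℝ) (x : E) (v : ℕ →₀ ℝ) :
    T g x v = (∑ i ∈ v.support, v i • g i) x := by
  simp [T, Finsupp.linearCombination_apply, Finsupp.sum]

/-- asymptotic bounds -/
def R (g : ℕ → E →L[ℝ] ℝ) (u : Blk) : Set ℝ :=
  {r | 0 ≤ r ∧ ∀ x, ∀ᶠ j in atTop, |T g x (u.1 j)| ≤ r * ‖x‖}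

theorem R_bdd (g : ℕ → E →L[ℝ] ℝ) (u : Blk) : BddBelow (R g u) := ⟨0, fun _ h => h.1⟩

theorem R_ne (g : ℕ → E →L[ℝ] ℝ) (C : ℝ) (hbdd : ∀ n, ‖g n‖ ≤ C) (u : Blk) : C ∈ R g u := by
  refine ⟨(norm_nonneg _).trans (hbdd 0), fun x => Eventually.of_forall fun j => ?_⟩
  rw [T_eq]
  refine (ContinuousLinearMap.le_opNorm (∑ i ∈ (u.1 j).support, u.1 j i • g i) x).trans ?_
  gcongr
  refine (norm_sum_le _ _).trans ?_
  calc _ ≤ ∑ i ∈ (u.1 j).support, |u.1 j i| * C := by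
        refine Finset.sum_le_sum fun i _ => ?_
        rw [norm_smul, Real.norm_eq_abs]
        gcongr
        exact hbdd i
    _ = C := by rw [← Finset.sum_mul, u.2.2, one_mul]

theorem R_mono (g : ℕ → E →L[ℝ] ℝ) {z u : Blk} (h : z ≤ u) : R g u ⊆ R g z := by
  rintro r ⟨h0, hr⟩
  refine ⟨h0, fun x => ?_⟩
  obtain ⟨N, hN⟩ := eventually_atTop.1 (hr x)
  filter_upwards [h N] with m hm
  exact hm (T g x) _ hN

theorem R_of_lt (g : ℕ → E →L[ℝ] ℝ) {u : Blk} (hne : (R g u).Nonempty) {r : ℝ}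
    (hr : sInf (R g u) < r) : r ∈ R g u := by
  obtain ⟨s, hs, hsr⟩ := exists_lt_of_csInf_lt hne hr
  refine ⟨hs.1.trans hsr.le, fun x => ?_⟩
  filter_upwards [hs.2 x] with j hj
  exact hj.trans (by gcongr)

theorem exists_of_lt (g : ℕ → E →L[ℝ] ℝ) {z : Blk} {r : ℝ} (h0 : 0 ≤ r)
    (hr : r < sInf (R g z)) : ∃ x, ‖x‖ ≤ 1 ∧ ∃ᶠ j in atTop, r < T g x (z.1 j) := by
  have h : r ∉ R g z := fun h => hr.not_ge (csInf_le (R_bdd g z) h)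
  simp only [R, Set.mem_setOf_eq, not_and, not_forall] at h
  obtain ⟨x, hx⟩ := h h0
  rw [not_eventually] at hx
  simp only [not_le] at hx
  have hx0 : 0 < ‖x‖ := by
    rw [norm_pos_iff]
    rintro rfl
    obtain ⟨j, hj⟩ := hx.exists
    rw [T_eq] at hj
    simp at hj
  have key : ∀ (c : ℝ) (j : ℕ), T g (c • x) (z.1 j) = c * T g x (z.1 j) := by
    intro c j
    rw [T_eq, T_eq, map_smul, smul_eq_mul]
  simp only [lt_abs, frequently_or_distrib] at hx
  rcases hx with hx | hx
  · refine ⟨‖x‖⁻¹ • x, by rw [norm_smul, norm_inv, norm_norm, inv_mul_cancel₀ hx0.ne'], ?_⟩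
    refine hx.mono fun j hj => ?_
    rw [key, inv_mul_eq_div, lt_div_iff₀ hx0]
    exact hj
  · refine ⟨(-‖x‖⁻¹) • x, by
      rw [norm_smul, norm_neg, norm_inv, norm_norm, inv_mul_cancel₀ hx0.ne'], ?_⟩
    refine hx.mono fun j hj => ?_
    rw [key, neg_mul, ← mul_neg, inv_mul_eq_div, lt_div_iff₀ hx0]
    exact hj

theorem norm_mix {ι : Type*} [Fintype ι] (c : ι → ℝ) (w : ι → (ℕ →₀ ℝ))
    (hd : Pairwise fun a b => Disjoint (w a).support (w b).support)
    (h1 : ∀ a, ∑ i ∈ (w a).support, |w a i| = 1) :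
    (∑ a, c a • w a).support ⊆ Finset.univ.biUnion (fun a => (w a).support) ∧
    ∑ i ∈ (∑ a, c a • w a).support, |(∑ a, c a • w a) i| = ∑ a, |c a| := by
  classical
  have hsub : (∑ a, c a • w a).support ⊆ Finset.univ.biUnion (fun a => (w a).support) := by
    intro i hi
    by_contra hcon
    simp only [Finset.mem_biUnion, Finset.mem_univ, true_and, not_exists,
      Finsupp.mem_support_iff, not_not] at hcon
    rw [Finsupp.mem_support_iff] at hi
    apply hi
    simp [Finsupp.finsetSum_apply, hcon]
  refine ⟨hsub, ?_⟩
  rw [Finset.sum_subset hsub (by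
    intro i _ hi
    rw [Finsupp.notMem_support_iff.1 hi, abs_zero]), Finset.sum_biUnion (by
    intro a _ b _ hab
    exact hd hab)]
  refine Finset.sum_congr rfl fun a _ => ?_
  rw [← mul_one |c a|, ← h1 a, Finset.mul_sum]
  refine Finset.sum_congr rfl fun i hi => ?_
  rw [Finsupp.finsetSum_apply, Finset.sum_eq_single a]
  · simp [abs_mul]
  · intro b _ hb
    have : i ∉ (w b).support := Finset.disjoint_left.1 (hd hb.symm) hi
    simp [Finsupp.notMem_support_iff.1 this]
  · simp

theorem step (g : ℕ → E →L[ℝ] ℝ) (u : Blk) (hne : (R g u).Nonempty) (hpos : 0 < sInf (R g u))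
    (hmin : ∀ z ≤ u, sInf (R g u) ≤ sInf (R g z))
    {ι : Type} [Fintype ι] [Nonempty ι] (Ω : ι → ℕ → Prop) (hΩ : ∀ t, ∃ᶠ j in atTop, Ω t j)
    (s : ι → ℝ) (hs : ∀ t, |s t| = 1) (η : ℝ) (hη0 : 0 < η) (hη : η < 1) :
    ∃ x, ‖x‖ ≤ 1 ∧ ∀ t, ∃ᶠ j in atTop, Ω t j ∧ η * sInf (R g u) ≤ s t * T g x (u.1 j) := by
  classical
  set r := sInf (R g u) with hrdef
  obtain ⟨e⟩ : Nonempty (ℕ ≃ ι × ℕ) := nonempty_equiv_of_countable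
  obtain ⟨q, hq, hqΩ⟩ := extraction_forall_of_frequently
    (P := fun k j => Ω (e k).1 j) (fun k => hΩ (e k).1)
  let p : ι → ℕ → ℕ := fun t j => q (e.symm (t, j))
  have hpΩ : ∀ t j, Ω t (p t j) := fun t j => by simpa using hqΩ (e.symm (t, j))
  have hpinj : ∀ t j t' j', p t j = p t' j' → t = t' ∧ j = j' := by
    intro t j t' j' h
    have := e.symm.injective (hq.injective h)
    simpa using this
  have hptend : ∀ t, Tendsto (p t) atTop atTop := fun t =>
    Function.Injective.nat_tendsto_atTop fun j j' h => (hpinj _ _ _ _ h).2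
  set d : ℝ := (Fintype.card ι : ℝ) with hd
  have hd1 : 1 ≤ d := by
    rw [hd]; exact_mod_cast Fintype.card_pos
  have hd0 : 0 < d := by linarith
  let zz : ℕ → (ℕ →₀ ℝ) := fun j => ∑ t, (s t / d) • u.1 (p t j)
  have habs : ∀ t, |s t / d| = 1 / d := fun t => by rw [abs_div, hs, abs_of_pos hd0]
  have hsum1 : ∑ _t : ι, (1 / d) = 1 := by
    rw [Finset.sum_const, Finset.card_univ, nsmul_eq_mul, ← hd]; field_simp
  have hmix := fun j => norm_mix (fun t => s t / d) (fun t => u.1 (p t j))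
    (fun a b hab => u.2.1 fun h => hab (hpinj _ _ _ _ h).1) (fun a => u.2.2 _)
  let z : Blk := ⟨zz, by
    intro j j' hj
    refine Finset.disjoint_of_subset_left (hmix j).1
      (Finset.disjoint_of_subset_right (hmix j').1 ?_)
    simp only [Finset.disjoint_biUnion_left, Finset.disjoint_biUnion_right]
    intro t _ t' _
    exact u.2.1 fun h => hj (hpinj _ _ _ _ h).2, by
    intro j
    rw [(hmix j).2]
    simp only [habs, hsum1]⟩
  have hzu : z ≤ u := by
    intro N
    filter_upwards [eventually_all.2 fun t => (hptend t).eventually_ge_atTop N] with m hm φ c hc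
    change |φ (∑ t, (s t / d) • u.1 (p t m))| ≤ c
    rw [map_sum]
    refine (Finset.abs_sum_le_sum_abs _ _).trans ?_
    calc _ ≤ ∑ _t : ι, (1 / d) * c := by
          refine Finset.sum_le_sum fun t _ => ?_
          rw [map_smul, smul_eq_mul, abs_mul, habs]
          gcongr
          exact hc _ (hm t)
      _ = c := by rw [← Finset.sum_mul, hsum1, one_mul]
  set κ : ℝ := (1 - η) / (2 * d) with hκ
  have hκ0 : 0 < κ := by rw [hκ]; apply div_pos <;> linarith
  have hκd : 2 * d * κ = 1 - η := by rw [hκ]; field_simp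
  have hκ1 : κ < 1 := by nlinarith
  obtain ⟨x, hx1, hx⟩ := exists_of_lt g (z := z) (r := r * (1 - κ))
    (mul_nonneg hpos.le (by linarith)) (lt_of_lt_of_le (by nlinarith) (hmin z hzu))
  refine ⟨x, hx1, fun t => ?_⟩
  have hup := (R_of_lt g hne (r := r * (1 + κ)) (by rw [← hrdef]; nlinarith)).2 x
  have hup' := eventually_all.2 fun t => (hptend t).eventually hup
  refine (hptend t).frequently ((hx.and_eventually hup').mono ?_)
  rintro j ⟨hj, hjup⟩
  refine ⟨hpΩ t j, ?_⟩
  have hbound : ∀ t', s t' * T g x (u.1 (p t' j)) ≤ r * (1 + κ) := by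
    intro t'
    refine (le_abs_self _).trans ?_
    rw [abs_mul, hs, one_mul]
    refine (hjup t').trans ?_
    exact mul_le_of_le_one_right (mul_nonneg hpos.le (by linarith)) hx1
  have hz : d * T g x (z.1 j) = ∑ t', s t' * T g x (u.1 (p t' j)) := by
    change d * T g x (∑ t, (s t / d) • u.1 (p t j)) = _
    rw [map_sum, Finset.mul_sum]
    refine Finset.sum_congr rfl fun t' _ => ?_
    rw [map_smul, smul_eq_mul]
    field_simp
  have hsplit := Finset.add_sum_erase Finset.univ
    (fun t' => s t' * T g x (u.1 (p t' j))) (Finset.mem_univ t)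
  have hrest : ∑ t' ∈ Finset.univ.erase t, s t' * T g x (u.1 (p t' j)) ≤
      (d - 1) * (r * (1 + κ)) := by
    refine (Finset.sum_le_card_nsmul _ _ _ fun t' _ => hbound t').trans ?_
    rw [nsmul_eq_mul, Finset.card_erase_of_mem (Finset.mem_univ t), Finset.card_univ,
      Nat.cast_sub Fintype.card_pos, ← hd, Nat.cast_one]
  have h3 : d * (r * (1 - κ)) ≤ d * T g x (z.1 j) := by gcongr
  have h4 : r * (1 - 2 * d * κ) + r * κ ≤ s t * T g x (u.1 (p t j)) := by
    nlinarith
  rw [hκd] at h4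
  nlinarith [mul_pos hpos hκ0]

/-- sign attached to a Boolean -/
def sg (b : Bool) : ℝ := if b then 1 else -1

theorem abs_sg (b : Bool) : |sg b| = 1 := by cases b <;> simp [sg]

/-- the parameters -/
noncomputable def dl (n : ℕ) : ℝ := 1 - 1 / ((n:ℝ) + 2)

theorem dl_mem (n : ℕ) : dl n ∈ Set.Ioo (0:ℝ) 1 := by
  have h : (0:ℝ) < (n:ℝ) + 2 := by positivity
  constructor
  · rw [dl, sub_pos, div_lt_one h]
    have : (0:ℝ) ≤ n := Nat.cast_nonneg n
    linarith
  · rw [dl]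
    have : 0 < 1 / ((n:ℝ) + 2) := by positivity
    linarith

theorem dl_tendsto : Tendsto dl atTop (nhds 1) := by
  have h := (tendsto_one_div_add_atTop_nhds_zero_nat (𝕜 := ℝ)).comp (tendsto_add_atTop_nat 1)
  have h2 : Tendsto (fun n : ℕ => 1 - 1 / ((n:ℝ) + 2)) atTop (nhds (1 - 0)) := by
    refine tendsto_const_nhds.sub (h.congr fun n => ?_)
    simp only [Function.comp]
    push_cast
    ring
  rw [sub_zero] at h2
  exact h2

/-- finite stage of the construction -/
def Stage (g : ℕ → E →L[ℝ] ℝ) (u : Blk) (n : ℕ) (x : ℕ → E) : Prop :=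
  (∀ i < n, ‖x i‖ ≤ 1) ∧ ∀ σ : ℕ → Bool, ∃ᶠ j in atTop,
    ∀ i < n, dl i * sInf (R g u) ≤ sg (σ i) * T g (x i) (u.1 j)

theorem stage_succ (g : ℕ → E →L[ℝ] ℝ) (u : Blk) (hne : (R g u).Nonempty)
    (hpos : 0 < sInf (R g u)) (hmin : ∀ z ≤ u, sInf (R g u) ≤ sInf (R g z))
    (n : ℕ) (x : ℕ → E) (hx : Stage g u n x) :
    ∃ y, Stage g u (n+1) (Function.update x n y) := by
  let ext : (Fin (n+1) → Bool) → ℕ → Bool := fun t i => if h : i < n + 1 then t ⟨i, h⟩ else true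
  obtain ⟨y, hy1, hy⟩ := step g u hne hpos hmin (ι := Fin (n+1) → Bool)
    (fun t j => ∀ i < n, dl i * sInf (R g u) ≤ sg (ext t i) * T g (x i) (u.1 j))
    (fun t => hx.2 (ext t)) (fun t => sg (t (Fin.last n))) (fun t => abs_sg _)
    (dl n) (dl_mem n).1 (dl_mem n).2
  refine ⟨y, ?_, ?_⟩
  · intro i hi
    rcases Nat.lt_succ_iff_lt_or_eq.1 hi with h | rfl
    · rw [Function.update_of_ne h.ne]; exact hx.1 i h
    · rw [Function.update_self]; exact hy1
  · intro σ
    refine (hy fun i => σ i).mono ?_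
    rintro j ⟨h1, h2⟩ i hi
    rcases Nat.lt_succ_iff_lt_or_eq.1 hi with h | rfl
    · rw [Function.update_of_ne h.ne]
      have := h1 i h
      simpa only [ext, dif_pos hi] using this
    · rw [Function.update_self]
      simpa using h2

theorem exists_seq (g : ℕ → E →L[ℝ] ℝ) (u : Blk) (hne : (R g u).Nonempty)
    (hpos : 0 < sInf (R g u)) (hmin : ∀ z ≤ u, sInf (R g u) ≤ sInf (R g z)) :
    ∃ a : ℕ → E, ∀ n, Stage g u n a := by
  choose Y hY using stage_succ g u hne hpos hmin
  let f : ∀ n, {x : ℕ → E // Stage g u n x} := fun n => Nat.rec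
    ⟨fun _ => 0, by
      refine ⟨fun i hi => absurd hi (Nat.not_lt_zero i), fun σ => ?_⟩
      exact (Eventually.of_forall fun j i hi => absurd hi (Nat.not_lt_zero i)).frequently⟩ (fun n x => ⟨Function.update x.1 n (Y n x.1 x.2), hY n x.1 x.2⟩) n
  have hf : ∀ n, (f (n+1)).1 = Function.update (f n).1 n (Y n (f n).1 (f n).2) := fun n => rfl
  have hstable : ∀ n i, i < n → (f n).1 i = (f (i+1)).1 i := by
    intro n i hi
    induction n, hi using Nat.le_induction with
    | base => rfl
    | succ m hm ih => rw [hf m, Function.update_of_ne (by omega), ih]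
  refine ⟨fun i => (f (i+1)).1 i, fun n => ?_⟩
  have := (f n).2
  refine ⟨fun i hi => ?_, fun σ => (this.2 σ).mono fun j hj i hi => ?_⟩
  · simp only [← hstable n i hi]; exact this.1 i hi
  · simp only [← hstable n i hi]; exact hj i hi

theorem pos_of_noblock (g : ℕ → E →L[ℝ] ℝ)
    (hnoblock : ¬ ∃ (F : ℕ → Finset ℕ) (lam : ℕ → ℝ),
      (Pairwise fun m n => Disjoint (F m) (F n)) ∧
      (∀ n, ∑ i ∈ F n, |lam i| = 1) ∧
      (∀ x : E, Tendsto (fun n => (∑ i ∈ F n, lam i • g i) x) atTop (nhds 0)))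
    (u : Blk) (hne : (R g u).Nonempty) : 0 < sInf (R g u) := by
  classical
  by_contra hcon
  apply hnoblock
  let lam : ℕ → ℝ := fun i => if h : ∃ n, i ∈ (u.1 n).support then u.1 h.choose i else 0
  have hlam : ∀ n, ∀ i ∈ (u.1 n).support, lam i = u.1 n i := by
    intro n i hi
    have h : ∃ n, i ∈ (u.1 n).support := ⟨n, hi⟩
    have heq : h.choose = n := by
      by_contra hh
      exact Finset.disjoint_left.1 (u.2.1 hh) h.choose_spec hi
    simp only [lam, dif_pos h, heq]
  refine ⟨fun n => (u.1 n).support, lam, u.2.1, fun n => ?_, fun x => ?_⟩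
  · rw [← u.2.2 n]
    exact Finset.sum_congr rfl fun i hi => by rw [hlam n i hi]
  · have heq : (fun n => (∑ i ∈ (u.1 n).support, lam i • g i) x) = fun n => T g x (u.1 n) := by
      funext n
      rw [T_eq]
      congr 1
      exact Finset.sum_congr rfl fun i hi => by rw [hlam n i hi]
    rw [heq, Metric.tendsto_nhds]
    intro ε hε
    have hr : 0 < ε / (‖x‖ + 1) := by positivity
    have := (R_of_lt g hne (lt_of_le_of_lt (not_lt.1 hcon) hr)).2 x
    filter_upwards [this] with j hj
    rw [dist_zero_right, Real.norm_eq_abs]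
    refine hj.trans_lt ?_
    rw [div_mul_eq_mul_div, div_lt_iff₀ (by positivity)]
    nlinarith

end

end HJ

/-- Generalized Hagler–Johnson theorem: if no normalized block sequence of a bounded
sequence of the dual converges pointwise to `0`, then `E` contains an asymptotically
isometric copy of `ℓ¹(ℕ)`. -/
theorem hagler_johnson_general {E : Type*} [NormedAddCommGroup E] [NormedSpace ℝ E]
    (g : ℕ → E →L[ℝ] ℝ) (C : ℝ) (hbdd : ∀ n, ‖g n‖ ≤ C)
    (hnoblock : ¬ ∃ (F : ℕ → Finset ℕ) (lam : ℕ → ℝ),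
      (Pairwise fun m n => Disjoint (F m) (F n)) ∧
      (∀ n, ∑ i ∈ F n, |lam i| = 1) ∧
      (∀ x : E, Tendsto (fun n => (∑ i ∈ F n, lam i • g i) x) atTop (nhds 0))) :
    ∃ (a : ℕ → E) (δ : ℕ → ℝ),
      (∀ n, ‖a n‖ ≤ 1) ∧ (∀ n, δ n ∈ Set.Ioo (0:ℝ) 1) ∧
      Tendsto δ atTop (nhds 1) ∧
      ∀ (n : ℕ) (lam : ℕ → ℝ),
        ∑ i ∈ Finset.range (n+1), δ i * |lam i| ≤
          ‖∑ i ∈ Finset.range (n+1), lam i • a i‖ := by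
  classical
  have hne : ∀ u, (HJ.R g u).Nonempty := fun u => ⟨C, HJ.R_ne g C hbdd u⟩
  let u0 : HJ.Blk := ⟨fun n => Finsupp.single n 1, by
    intro m n hmn
    simp only [Finsupp.support_single_ne_zero _ (one_ne_zero (α := ℝ)),
      Finset.disjoint_singleton]
    exact hmn, by
    intro n
    rw [Finsupp.support_single_ne_zero _ (one_ne_zero (α := ℝ))]
    simp⟩
  obtain ⟨u, hu⟩ := HJ.exists_min (fun u => sInf (HJ.R g u))
    (fun u => le_csInf (hne u) fun r hr => hr.1)
    (fun z u hzu => csInf_le_csInf (HJ.R_bdd g z) (hne u) (HJ.R_mono g hzu)) u0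
  have hpos := HJ.pos_of_noblock g hnoblock u (hne u)
  obtain ⟨a, ha⟩ := HJ.exists_seq g u (hne u) hpos hu
  refine ⟨a, HJ.dl, fun n => (ha (n+1)).1 n (Nat.lt_succ_self n), HJ.dl_mem, HJ.dl_tendsto, ?_⟩
  intro n lam
  set r := sInf (HJ.R g u) with hr
  set y := ∑ i ∈ Finset.range (n+1), lam i • a i with hy
  set S := ∑ i ∈ Finset.range (n+1), HJ.dl i * |lam i| with hS
  have key : ∀ r', r < r' → r * S ≤ r' * ‖y‖ := by
    intro r' hr'
    have hup := (HJ.R_of_lt g (hne u) hr').2 y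
    obtain ⟨j, hj, hjup⟩ :=
      (((ha (n+1)).2 fun i => decide (0 ≤ lam i)).and_eventually hup).exists
    refine le_trans ?_ ((le_abs_self _).trans hjup)
    have hT : HJ.T g y (u.1 j) = ∑ i ∈ Finset.range (n+1), lam i * HJ.T g (a i) (u.1 j) := by
      simp only [HJ.T_eq]
      rw [hy, map_sum]
      simp only [map_smul, smul_eq_mul]
    rw [hT, hS, Finset.mul_sum]
    refine Finset.sum_le_sum fun i hi => ?_
    have h1 := hj i (Finset.mem_range.1 hi)
    have h2 : lam i = |lam i| * HJ.sg (decide (0 ≤ lam i)) := by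
      by_cases h : 0 ≤ lam i
      · simp [HJ.sg, h, abs_of_nonneg h]
      · simp [HJ.sg, h, abs_of_neg (not_le.1 h)]
    calc r * (HJ.dl i * |lam i|) = |lam i| * (HJ.dl i * r) := by ring
      _ ≤ |lam i| * (HJ.sg (decide (0 ≤ lam i)) * HJ.T g (a i) (u.1 j)) := by gcongr
      _ = lam i * HJ.T g (a i) (u.1 j) := by rw [← mul_assoc, ← h2]
  have hlim : Tendsto (fun r' : ℝ => r' * ‖y‖) (nhdsWithin r (Set.Ioi r)) (nhds (r * ‖y‖)) :=
    ((continuous_id.mul continuous_const).tendsto r).mono_left nhdsWithin_le_nhds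
  have hfin : r * S ≤ r * ‖y‖ :=
    ge_of_tendsto hlim (by filter_upwards [self_mem_nhdsWithin] with r' hr' using key r' hr')
  exact le_of_mul_le_mul_left hfin hpos
end

section
/- Let E be a normed space whose closed dual unit ball Γ_{E'} is weak-star block compact (every sequence in Γ_{E'} has a normalized block sequence converging in the weak-star topology). If every f ∈ E' attains its supremum on the closed unit ball of E, then E has no ϑ-triangular sequence for any ϑ > 0, i.e., E is J-reflexive. (Assume the Hahn–Banach theorem.) -/
open Filter

/-! The proof is a short version of the argument of James; it does not need the block compactness. -/

namespace JamesAux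

variable {E : Type*} [NormedAddCommGroup E] [NormedSpace ℝ E]

/-- Decreasing sequences of nonempty convex subsets of the dual unit ball. -/
def Good (C : ℕ → Set (E →L[ℝ] ℝ)) : Prop :=
  (∀ n, (C n).Nonempty) ∧ (∀ n, Convex ℝ (C n)) ∧ Antitone C ∧ ∀ n, ∀ f ∈ C n, ‖f‖ ≤ 1

/-- Weak-star cluster points of a sequence of convex sets. -/
def W (C : ℕ → Set (E →L[ℝ] ℝ)) : Set (E →L[ℝ] ℝ) :=
  {w | ∀ n x, ∀ ε > 0, ∃ f ∈ C n, f x < w x + ε}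

lemma W_mono {C C' : ℕ → Set (E →L[ℝ] ℝ)} (h : ∀ n, ∃ m, C' m ⊆ C n) : W C' ⊆ W C := by
  intro w hw n x ε hε
  obtain ⟨m, hm⟩ := h n
  obtain ⟨f, hf, hfx⟩ := hw m x ε hε
  exact ⟨f, hm hf, hfx⟩

lemma exists_cluster (h : ℕ → E →L[ℝ] ℝ) (hh : ∀ n, ‖h n‖ ≤ 1) :
    ∃ w : E →L[ℝ] ℝ, ∀ n x, ∀ ε > 0, ∃ m ≥ n, h m x < w x + ε := by
  have hc := WeakDual.isCompact_closedBall (𝕜 := ℝ) (E := E) 0 1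
  have hmem : ∀ n, StrongDual.toWeakDual (h n) ∈
      (WeakDual.toStrongDual ⁻¹' Metric.closedBall (0 : StrongDual ℝ E) 1) := by
    intro n
    simpa using hh n
  obtain ⟨w, -, hw⟩ := hc.exists_mapClusterPt (f := atTop)
    (u := fun n => StrongDual.toWeakDual (h n)) (by
      simpa using Filter.Eventually.of_forall (f := atTop) hmem)
  refine ⟨WeakDual.toStrongDual w, fun n x ε hε => ?_⟩
  have hev : ∀ᶠ z : WeakDual ℝ E in nhds w, z x < w x + ε := by
    have : Continuous fun z : WeakDual ℝ E => z x := WeakDual.eval_continuous x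
    exact this.continuousAt.eventually_lt continuousAt_const (by simpa using hε)
  have := (hw.frequently hev).and_eventually (eventually_ge_atTop n)
  obtain ⟨m, hm, hmn⟩ := this.exists
  exact ⟨m, hmn, hm⟩

lemma W_nonempty {C : ℕ → Set (E →L[ℝ] ℝ)} (hC : Good C) : (W C).Nonempty := by
  choose h hh using hC.1
  obtain ⟨w, hw⟩ := exists_cluster h (fun n => hC.2.2.2 n _ (hh n))
  refine ⟨w, fun n x ε hε => ?_⟩
  obtain ⟨m, hm, hlt⟩ := hw n x ε hε
  exact ⟨h m, hC.2.2.1 hm (hh m), hlt⟩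

lemma norm_le_of_unit {F : E →L[ℝ] ℝ} {M : ℝ} (h : ∀ y, ‖y‖ ≤ 1 → F y ≤ M) : ‖F‖ ≤ M := by
  have hM : 0 ≤ M := by simpa using h 0 (by simp)
  refine F.opNorm_le_bound hM fun x => ?_
  have key : ∀ x, F x ≤ M * ‖x‖ := by
    intro x
    rcases eq_or_ne x 0 with rfl | hx
    · simp
    have hx' : 0 < ‖x‖ := norm_pos_iff.2 hx
    have := h (‖x‖⁻¹ • x) (by rw [norm_smul, norm_inv, norm_norm, inv_mul_cancel₀ hx'.ne'])
    rw [map_smul, smul_eq_mul, inv_mul_le_iff₀ hx'] at this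
    linarith
  rw [Real.norm_eq_abs, abs_le]
  have h2 := key (-x)
  rw [map_neg, norm_neg] at h2
  exact ⟨by linarith, key x⟩

lemma apply_le {F : E →L[ℝ] ℝ} {y : E} (hy : ‖y‖ ≤ 1) : F y ≤ ‖F‖ :=
  (le_abs_self _).trans ((F.le_opNorm y).trans (mul_le_of_le_one_right (norm_nonneg _) hy))

lemma W_norm {C : ℕ → Set (E →L[ℝ] ℝ)} (hC : Good C) {w : E →L[ℝ] ℝ} (hw : w ∈ W C) :
    ‖w‖ ≤ 1 := by
  refine norm_le_of_unit fun y hy => ?_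
  refine le_of_forall_pos_le_add fun ε hε => ?_
  obtain ⟨f, hf, hlt⟩ := hw 0 (-y) ε hε
  have h1 : f y ≤ 1 := (apply_le hy).trans (hC.2.2.2 _ f hf)
  simp only [map_neg] at hlt
  linarith

lemma shrink {C : ℕ → Set (E →L[ℝ] ℝ)} (hC : Good C) (g : E →L[ℝ] ℝ) {ε : ℝ} (hε : 0 < ε) :
    ∃ C', Good C' ∧ (∀ n, C' n ⊆ C n) ∧ ∀ w ∈ W C', ∀ w' ∈ W C', ‖g - w‖ ≤ ‖g - w'‖ + ε := by
  set S : Set ℝ := (fun w => ‖g - w‖) '' W C with hS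
  have hne : S.Nonempty := (W_nonempty hC).image _
  have hbdd : BddAbove S := by
    refine ⟨‖g‖ + 1, ?_⟩
    rintro _ ⟨w, hw, rfl⟩
    exact (norm_sub_le _ _).trans (by linarith [W_norm hC hw])
  obtain ⟨_, ⟨w0, hw0, rfl⟩, hlt⟩ := exists_lt_of_lt_csSup hne (sub_lt_self (sSup S) (half_pos hε))
  simp only at hlt
  obtain ⟨x, hx, hgx⟩ : ∃ x, ‖x‖ ≤ 1 ∧ ‖g - w0‖ - ε / 4 < (g - w0) x := by
    by_contra! hcon
    have := norm_le_of_unit hcon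
    linarith
  refine ⟨fun n => C n ∩ {f | f x < w0 x + ε / 4}, ⟨?_, ?_, ?_, ?_⟩, fun n => Set.inter_subset_left, ?_⟩
  · intro n
    obtain ⟨f, hf, h⟩ := hw0 n x (ε / 4) (by positivity)
    exact ⟨f, hf, h⟩
  · intro n
    refine (hC.2.1 n).inter ?_
    exact convex_halfSpace_lt (f := fun f : E →L[ℝ] ℝ => f x) ⟨fun _ _ => rfl, fun _ _ => rfl⟩ _
  · intro m n hmn
    exact Set.inter_subset_inter_left _ (hC.2.2.1 hmn)
  · intro n f hf
    exact hC.2.2.2 n f hf.1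
  · intro w hw w' hw'
    have h1 : ‖g - w‖ ≤ sSup S :=
      le_csSup hbdd ⟨w, W_mono (fun n => ⟨n, Set.inter_subset_left⟩) hw, rfl⟩
    have h2 : w' x ≤ w0 x + ε / 4 := by
      refine le_of_forall_pos_le_add fun η hη => ?_
      obtain ⟨f, hf, hlt⟩ := hw' 0 (-x) η hη
      have := hf.2
      simp only [map_neg, Set.mem_setOf_eq] at hlt this
      linarith
    have h3 : (g - w') x ≤ ‖g - w'‖ := apply_le hx
    simp only [ContinuousLinearMap.sub_apply] at h3 hgx
    linarith

lemma stabilize {C : ℕ → Set (E →L[ℝ] ℝ)} (hC : Good C) (d : ℕ → E →L[ℝ] ℝ) :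
    ∃ C', Good C' ∧ (∀ n, C' n ⊆ C n) ∧
      ∀ g ∈ closure (Set.range d), ∀ w ∈ W C', ∀ w' ∈ W C', ‖g - w‖ ≤ ‖g - w'‖ := by
  have step : ∀ (k : ℕ) (B : {B : ℕ → Set (E →L[ℝ] ℝ) // Good B}),
      ∃ B' : {B : ℕ → Set (E →L[ℝ] ℝ) // Good B}, (∀ n, B'.1 n ⊆ B.1 n) ∧
        ∀ w ∈ W B'.1, ∀ w' ∈ W B'.1,
          ‖d k.unpair.1 - w‖ ≤ ‖d k.unpair.1 - w'‖ + 1 / ((k.unpair.2 : ℝ) + 1) := by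
    intro k B
    obtain ⟨B', h1, h2, h3⟩ := shrink B.2 (d k.unpair.1)
      (ε := 1 / ((k.unpair.2 : ℝ) + 1)) (by positivity)
    exact ⟨⟨B', h1⟩, h2, h3⟩
  choose T hT1 hT2 using step
  let B : ℕ → {B : ℕ → Set (E →L[ℝ] ℝ) // Good B} := fun k => Nat.rec ⟨C, hC⟩ (fun k b => T k b) k
  have hB0 : B 0 = ⟨C, hC⟩ := rfl
  have hBs : ∀ k, B (k + 1) = T k (B k) := fun k => rfl
  have hanti : ∀ n, Antitone fun k => (B k).1 n := by
    intro n
    refine antitone_nat_of_succ_le fun k => ?_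
    rw [hBs]
    exact hT1 k (B k) n
  have hsub : ∀ k, W (fun n => (B n).1 n) ⊆ W (B k).1 := by
    intro k
    refine W_mono fun n => ⟨max k n, ?_⟩
    exact ((hanti _) (le_max_left k n)).trans ((B k).2.2.2.1 (le_max_right k n))
  have hgood : Good (fun n => (B n).1 n) := by
    refine ⟨fun n => (B n).2.1 n, fun n => (B n).2.2.1 n, ?_, fun n => (B n).2.2.2.2 n⟩
    intro m n hmn
    exact ((hanti _) hmn).trans ((B m).2.2.2.1 hmn)
  refine ⟨fun n => (B n).1 n, hgood, fun n => hanti n (Nat.zero_le n), ?_⟩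
  intro g hg w hw w' hw'
  have hcl : IsClosed {g : E →L[ℝ] ℝ | ‖g - w‖ ≤ ‖g - w'‖} :=
    isClosed_le (by fun_prop) (by fun_prop)
  refine hcl.closure_subset_iff.2 ?_ hg
  rintro _ ⟨j, rfl⟩
  change ‖d j - w‖ ≤ ‖d j - w'‖
  refine le_of_forall_pos_le_add fun η hη => ?_
  obtain ⟨m, hm⟩ := exists_nat_one_div_lt hη
  have hk := hT2 (Nat.pair j m) (B (Nat.pair j m)) w (by rw [← hBs]; exact hsub (Nat.pair j m + 1) hw) w'
    (by rw [← hBs]; exact hsub (Nat.pair j m + 1) hw')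
  simp only [Nat.unpair_pair] at hk
  linarith

lemma core {C : ℕ → Set (E →L[ℝ] ℝ)} (hC : Good C) {θ : ℝ} (hθ : 0 < θ) (hθ1 : θ ≤ 1)
    (hst : ∀ g ∈ C 0, ∀ w ∈ W C, ∀ w' ∈ W C, ‖g - w‖ ≤ ‖g - w'‖)
    (hdist : ∀ g ∈ C 0, ∀ w ∈ W C, θ ≤ ‖g - w‖)
    (hsup : ∀ f : E →L[ℝ] ℝ, ∃ x : E, ‖x‖ ≤ 1 ∧ ∀ y : E, ‖y‖ ≤ 1 → f y ≤ f x) : False := by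
  obtain ⟨w0, hw0⟩ := W_nonempty hC
  obtain ⟨r, hr⟩ : ∃ r : ℝ, r = θ / 8 := ⟨_, rfl⟩
  have hr0 : 0 < r := by rw [hr]; positivity
  have hr1 : r < 1 := by rw [hr]; linarith
  have hε : ∀ n : ℕ, 0 < θ / 4 * r ^ (n + 1) * (1 / 2) ^ (n + 1) := fun n => by positivity
  have step : ∀ (n : ℕ) (u : E →L[ℝ] ℝ), ∃ h ∈ C n, ∀ h' ∈ C n,
      ‖u + r ^ n • h - w0‖ ≤ ‖u + r ^ n • h' - w0‖ + θ / 4 * r ^ (n + 1) * (1 / 2) ^ (n + 1) := by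
    intro n u
    have hne : ((fun h => ‖u + r ^ n • h - w0‖) '' C n).Nonempty := (hC.1 n).image _
    obtain ⟨_, ⟨h, hh, rfl⟩, hlt⟩ := exists_lt_of_csInf_lt hne (lt_add_of_pos_right _ (hε n))
    refine ⟨h, hh, fun h' hh' => hlt.le.trans ?_⟩
    gcongr
    exact csInf_le ⟨0, by rintro _ ⟨_, _, rfl⟩; exact norm_nonneg _⟩ ⟨h', hh', rfl⟩
  choose H hH1 hH2 using step
  let u : ℕ → E →L[ℝ] ℝ := fun n => Nat.rec 0 (fun n v => v + (r ^ n * (1 - r)) • H n v) n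
  have hu0 : u 0 = 0 := rfl
  have hus : ∀ n, u (n + 1) = u n + (r ^ n * (1 - r)) • H n (u n) := fun n => rfl
  obtain ⟨h, hh⟩ : ∃ h : ℕ → E →L[ℝ] ℝ, ∀ n, h n = H n (u n) := ⟨_, fun n => rfl⟩
  have hhC : ∀ n, h n ∈ C n := fun n => by rw [hh]; exact hH1 n _
  have hh1 : ∀ n, ‖h n‖ ≤ 1 := fun n => hC.2.2.2 n _ (hhC n)
  have hmin : ∀ n, ∀ h' ∈ C n, ‖u n + r ^ n • h n - w0‖ ≤
      ‖u n + r ^ n • h' - w0‖ + θ / 4 * r ^ (n + 1) * (1 / 2) ^ (n + 1) := fun n => by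
    rw [hh]; exact hH2 n _
  have hus' : ∀ n, u (n + 1) = u n + (r ^ n * (1 - r)) • h n := fun n => by rw [hh, hus]
  clear_value u
  -- later states are admissible competitors
  have hcomp : ∀ n k, ∀ g ∈ C (n + k), ∃ g' ∈ C n, u (n + k) + r ^ (n + k) • g = u n + r ^ n • g' := by
    intro n k
    induction k with
    | zero => exact fun g hg => ⟨g, hg, rfl⟩
    | succ k ih =>
      intro g hg
      obtain ⟨g', hg', he⟩ := ih ((1 - r) • h (n + k) + r • g)
        (hC.2.1 _ (hhC _) (hC.2.2.1 (Nat.le_succ _) hg) (by linarith) hr0.le (by ring))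
      refine ⟨g', hg', ?_⟩
      rw [← he, ← add_assoc, hus']
      module
  obtain ⟨w, hw⟩ := exists_cluster h hh1
  have hwW : w ∈ W C := by
    intro n x ε hε
    obtain ⟨m, hm, hlt⟩ := hw n x ε hε
    exact ⟨h m, hC.2.2.1 hm (hhC m), hlt⟩
  have hwn : ‖w‖ ≤ 1 := W_norm hC hwW
  have hG0 : ∀ n, ∀ g ∈ C n, u n + r ^ n • g ∈ C 0 := by
    intro n g hg
    obtain ⟨g', hg', he⟩ := hcomp 0 n g (by simpa using hg)
    simp only [zero_add, hu0, pow_zero, one_smul] at he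
    rwa [he]
  have hminw : ∀ n k, ‖u n + r ^ n • h n - w‖ ≤
      ‖u (n + k) + r ^ (n + k) • h (n + k) - w‖ + θ / 4 * r ^ (n + 1) * (1 / 2) ^ (n + 1) := by
    intro n k
    obtain ⟨g', hg', he⟩ := hcomp n k _ (hhC (n + k))
    have h1 := hst _ (hG0 n _ (hhC n)) w hwW w0 hw0
    have h2 := hmin n g' hg'
    have h3 := hst _ (hG0 n _ hg') w0 hw0 w hwW
    rw [he]
    linarith
  -- the limit
  have hd : ∀ n, dist (u n) (u (n + 1)) ≤ (1 - r) * r ^ n := by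
    intro n
    rw [hus', dist_self_add_right, norm_smul, Real.norm_eq_abs, abs_of_nonneg
      (mul_nonneg (by positivity) (by linarith))]
    have : 0 ≤ r ^ n * (1 - r) := mul_nonneg (by positivity) (by linarith)
    nlinarith [hh1 n]
  obtain ⟨U, hU⟩ := cauchySeq_tendsto_of_complete (cauchySeq_of_le_geometric r (1 - r) hr1 hd)
  have hUd : ∀ n, ‖U - u n‖ ≤ r ^ n := by
    intro n
    have := dist_le_of_le_geometric_of_tendsto r (1 - r) hr1 hd hU n
    rw [dist_comm, dist_eq_norm] at this
    rwa [mul_div_assoc, mul_div_left_comm, div_self (by linarith), mul_one] at this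
  have hGlim : Tendsto (fun n => u n + r ^ n • h n - w) atTop (nhds (U - w)) := by
    have h0 : Tendsto (fun n => r ^ n • h n) atTop (nhds 0) := by
      refine squeeze_zero_norm (a := fun n => r ^ n) (fun n => ?_)
        (tendsto_pow_atTop_nhds_zero_of_lt_one hr0.le hr1)
      rw [norm_smul, Real.norm_eq_abs, abs_of_nonneg (by positivity)]
      exact mul_le_of_le_one_right (by positivity) (hh1 n)
    simpa using (hU.add h0).sub_const w
  obtain ⟨x, hx, hxmax⟩ := hsup (U - w)
  obtain ⟨A, hA⟩ : ∃ A, A = (U - w) x := ⟨_, rfl⟩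
  have hAn : ‖U - w‖ ≤ A := by rw [hA]; exact norm_le_of_unit hxmax
  have hGA : ∀ n, ‖u n + r ^ n • h n - w‖ ≤ A + θ / 4 * r ^ (n + 1) * (1 / 2) ^ (n + 1) := by
    intro n
    refine le_trans ?_ (add_le_add_left hAn _)
    refine ge_of_tendsto (hGlim.norm.add_const _) ?_
    filter_upwards [eventually_ge_atTop n] with m hm
    obtain ⟨k, rfl⟩ := Nat.exists_eq_add_of_le hm
    exact hminw n k
  have hAθ : θ ≤ A := by
    refine le_trans ?_ hAn
    exact ge_of_tendsto hGlim.norm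
      (Filter.Eventually.of_forall fun n => hdist _ (hG0 n _ (hhC n)) w hwW)
  have hv : ∀ n : ℕ, ‖u n - (1 - r ^ n) • w‖ ≤ A - r ^ n * (A - θ / 4 * (1 - (1 / 2) ^ n)) := by
    intro n
    induction n with
    | zero => simp [hu0]
    | succ n ih =>
      have e : u (n + 1) - (1 - r ^ (n + 1)) • w =
          r • (u n - (1 - r ^ n) • w) + (1 - r) • (u n + r ^ n • h n - w) := by
        rw [hus', pow_succ]
        module
      rw [e]
      refine (norm_add_le _ _).trans ?_
      rw [norm_smul, norm_smul, Real.norm_eq_abs, Real.norm_eq_abs, abs_of_pos hr0,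
        abs_of_pos (by linarith : 0 < 1 - r)]
      have h1 := mul_le_mul_of_nonneg_left ih hr0.le
      have h2 := mul_le_mul_of_nonneg_left (hGA n) (by linarith : 0 ≤ 1 - r)
      have h3 : 0 ≤ r * (θ / 4 * r ^ (n + 1) * (1 / 2) ^ (n + 1)) :=
        mul_nonneg hr0.le (hε n).le
      refine (add_le_add h1 h2).trans ?_
      have e2 : r * (A - r ^ n * (A - θ / 4 * (1 - (1 / 2) ^ n))) +
          (1 - r) * (A + θ / 4 * r ^ (n + 1) * (1 / 2) ^ (n + 1)) =
          A - r ^ (n + 1) * (A - θ / 4 * (1 - (1 / 2) ^ (n + 1))) -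
            r * (θ / 4 * r ^ (n + 1) * (1 / 2) ^ (n + 1)) := by
        rw [pow_succ, pow_succ]
        ring
      rw [e2]
      linarith
  have hfin : ∀ n, w x + θ / 2 ≤ h n x := by
    intro n
    have h1 : (u n - (1 - r ^ n) • w) x ≤ A - r ^ n * (A - θ / 4) := by
      refine ((apply_le hx).trans (hv n)).trans ?_
      have : 0 ≤ r ^ n * (θ / 4 * (1 / 2) ^ n) := by positivity
      nlinarith
    have h2 : (U - u (n + 1)) x ≤ r ^ (n + 1) := (apply_le hx).trans (hUd _)
    have h3 : (-w) x ≤ 1 := (apply_le hx).trans (by rwa [norm_neg])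
    have h4 : r ^ (n + 1) * (-w) x ≤ r ^ (n + 1) * 1 :=
      mul_le_mul_of_nonneg_left h3 (by positivity)
    rw [hus'] at h2
    simp only [ContinuousLinearMap.sub_apply, ContinuousLinearMap.add_apply,
      ContinuousLinearMap.smul_apply, ContinuousLinearMap.neg_apply, smul_eq_mul] at h1 h2 h4 hA
    have h5 : r ^ n * (A - θ / 4 - 2 * r) ≤ r ^ n * ((1 - r) * (h n x - w x)) := by
      rw [pow_succ] at h2 h4
      linarith
    have h6 := le_of_mul_le_mul_left h5 (by positivity)
    have h7 : θ / 2 ≤ (1 - r) * (h n x - w x) := by linarith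
    have h8 : 0 ≤ h n x - w x := by
      by_contra hneg
      push Not at hneg
      have := mul_neg_of_pos_of_neg (by linarith : 0 < 1 - r) hneg
      linarith
    nlinarith
  obtain ⟨m, -, hm⟩ := hw 0 x (θ / 2) (by positivity)
  linarith [hfin m]

end JamesAux

open JamesAux

open Filter

/-- If the dual unit ball is weak-star block compact and every functional attains its
supremum on the unit ball, then `E` has no `ϑ`-triangular sequence for any `ϑ > 0`. -/
theorem blockCompact_supAttaining_no_triangular {E : Type*}
    [NormedAddCommGroup E] [NormedSpace ℝ E]
    (hblockcompact : ∀ f : ℕ → E →L[ℝ] ℝ, (∀ n, ‖f n‖ ≤ 1) →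
      ∃ (F : ℕ → Finset ℕ) (lam : ℕ → ℝ) (φ : E →L[ℝ] ℝ),
        (Pairwise fun m n => Disjoint (F m) (F n)) ∧
        (∀ n, ∑ i ∈ F n, |lam i| = 1) ∧
        (∀ x : E, Tendsto (fun n => (∑ i ∈ F n, lam i • f i) x) atTop (nhds (φ x))))
    (hsup : ∀ f : E →L[ℝ] ℝ, ∃ x : E, ‖x‖ ≤ 1 ∧ ∀ y : E, ‖y‖ ≤ 1 → f y ≤ f x) :
    ¬ ∃ (ϑ : ℝ) (a : ℕ → E)
        (f : ℕ → (Submodule.span ℝ (Set.range a) →L[ℝ] ℝ)),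
      0 < ϑ ∧ (∀ n, ‖a n‖ ≤ 1) ∧ (∀ n, ‖f n‖ ≤ 1) ∧
      (∀ n i, i < n → f n ⟨a i, Submodule.subset_span ⟨i, rfl⟩⟩ = 0) ∧
      (∀ n i, n ≤ i → ϑ ≤ f n ⟨a i, Submodule.subset_span ⟨i, rfl⟩⟩) := by
  rintro ⟨θ, a, f, hθ, ha, hf, hf0, hf1⟩
  choose g hg1 hg2 using fun n => exists_extension_norm_eq _ (f n)
  have hgn : ∀ n, ‖g n‖ ≤ 1 := fun n => by rw [hg2]; exact hf n
  have hg0 : ∀ n i, i < n → g n (a i) = 0 := fun n i hi => by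
    rw [← hf0 n i hi]; exact hg1 n ⟨a i, Submodule.subset_span ⟨i, rfl⟩⟩
  have hgθ : ∀ n i, n ≤ i → θ ≤ g n (a i) := fun n i hi =>
    (hf1 n i hi).trans_eq (hg1 n ⟨a i, Submodule.subset_span ⟨i, rfl⟩⟩).symm
  let C : ℕ → Set (E →L[ℝ] ℝ) := fun n => convexHull ℝ (g '' Set.Ici n)
  have hC : Good C := by
    refine ⟨fun n => ?_, fun n => convex_convexHull _ _, ?_, ?_⟩
    · exact ⟨g n, subset_convexHull _ _ ⟨n, le_refl n, rfl⟩⟩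
    · intro m n hmn
      exact convexHull_mono (Set.image_mono (Set.Ici_subset_Ici.2 hmn))
    · intro n φ hφ
      have : C n ⊆ Metric.closedBall 0 1 := by
        refine convexHull_min ?_ (convex_closedBall _ _)
        rintro _ ⟨k, -, rfl⟩
        simpa using hgn k
      simpa using this hφ
  have hWa : ∀ w ∈ W C, ∀ i, w (a i) ≤ 0 := by
    intro w hw i
    refine le_of_forall_pos_le_add fun η hη => ?_
    obtain ⟨φ, hφ, hlt⟩ := hw (i + 1) (-(a i)) η hη
    have : C (i + 1) ⊆ {φ : E →L[ℝ] ℝ | φ (a i) = 0} := by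
      refine convexHull_min ?_ ?_
      · rintro _ ⟨k, hk, rfl⟩
        exact hg0 k i hk
      · exact convex_hyperplane (f := fun φ : E →L[ℝ] ℝ => φ (a i))
          ⟨fun _ _ => rfl, fun _ _ => rfl⟩ _
    have h0 : φ (a i) = 0 := this hφ
    simp only [map_neg, h0] at hlt
    linarith
  have hlow : C 0 ⊆ {φ : E →L[ℝ] ℝ | ∃ N, ∀ i ≥ N, θ ≤ φ (a i)} := by
    refine convexHull_min ?_ ?_
    · rintro _ ⟨k, -, rfl⟩
      exact ⟨k, fun i hi => hgθ k i hi⟩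
    · rintro φ ⟨N, hN⟩ ψ ⟨M, hM⟩ s t hs ht hst
      refine ⟨max N M, fun i hi => ?_⟩
      have h1 := mul_le_mul_of_nonneg_left (hN i ((le_max_left _ _).trans hi)) hs
      have h2 := mul_le_mul_of_nonneg_left (hM i ((le_max_right _ _).trans hi)) ht
      have h3 : s * θ + t * θ = θ := by rw [← add_mul, hst, one_mul]
      simp only [ContinuousLinearMap.add_apply, ContinuousLinearMap.smul_apply, smul_eq_mul]
      linarith
  have hsep : TopologicalSpace.IsSeparable (C 0) := by
    have h1 : TopologicalSpace.IsSeparable (Submodule.span ℝ (Set.range g) : Set (E →L[ℝ] ℝ)) :=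
      (Set.countable_range g).isSeparable.span
    refine h1.mono (convexHull_min ?_ (Submodule.convex _))
    rintro _ ⟨k, -, rfl⟩
    exact Submodule.subset_span ⟨k, rfl⟩
  obtain ⟨D, hDc, hD⟩ := hsep
  have hDne : D.Nonempty := by
    rw [← closure_nonempty_iff]
    exact (hC.1 0).mono hD
  obtain ⟨d, rfl⟩ := hDc.exists_eq_range hDne
  obtain ⟨C', hC', hsub, hst⟩ := stabilize hC d
  have hWsub : W C' ⊆ W C := W_mono fun n => ⟨n, hsub n⟩
  have hθ1 : θ ≤ 1 := by
    have := (hgθ 0 0 le_rfl).trans (apply_le (ha 0))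
    exact this.trans (hgn 0)
  refine core hC' hθ hθ1 (fun φ hφ => hst φ (hD (hsub 0 hφ))) (fun φ hφ w hw => ?_) hsup
  obtain ⟨N, hN⟩ := hlow (hsub 0 hφ)
  have h1 := hN N le_rfl
  have h2 := hWa w (hWsub hw) N
  have h3 : (φ - w) (a N) ≤ ‖φ - w‖ := apply_le (ha N)
  simp only [ContinuousLinearMap.sub_apply] at h3
  linarith
end

section
/- Let E be a separable normed space in which every continuous linear functional attains its supremum on the closed unit ball. Then E is J-reflexive: Γ_E contains no sequence (a_n) with inf_n distance(span{a_i : i < n}, conv{a_i : i ≥ n}) > 0. -/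
open Filter

lemma simons_aux {E : Type*} [NormedAddCommGroup E] [NormedSpace ℝ E]
    (hsup : ∀ f : E →L[ℝ] ℝ, ∃ x : E, ‖x‖ ≤ 1 ∧ ∀ y : E, ‖y‖ ≤ 1 → f y ≤ f x)
    (g : ℕ → (E →L[ℝ] ℝ)) (M : ℝ) (hM : ∀ k, ‖g k‖ ≤ M)
    (hlow : ∀ c ∈ convexHull ℝ (g '' {k | 0 ≤ k}), 1 ≤ ‖c‖)
    (hlim : ∀ b, Tendsto (fun k => g k b) atTop (nhds 0)) : False := by
  have hne : ∀ n : ℕ, g n ∈ convexHull ℝ (g '' {k | n ≤ k}) := fun n =>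
    subset_convexHull ℝ _ ⟨n, le_refl n, rfl⟩
  have hF : ∀ (n : ℕ) (s : E →L[ℝ] ℝ), ∃ h ∈ convexHull ℝ (g '' {k | n ≤ k}),
      ∀ c ∈ convexHull ℝ (g '' {k | n ≤ k}),
        ‖s + (1/2 : ℝ)^n • h‖ ≤ ‖s + (1/2 : ℝ)^n • c‖ + (1/4 : ℝ) * (1/4)^n := by
    intro n s
    set A := (fun c => ‖s + (1/2 : ℝ)^n • c‖) '' convexHull ℝ (g '' {k | n ≤ k}) with hA
    have hAne : A.Nonempty := ⟨_, g n, hne n, rfl⟩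
    have hbdd : BddBelow A := ⟨0, by rintro _ ⟨c, _, rfl⟩; exact norm_nonneg _⟩
    have hpos : (0 : ℝ) < (1/4 : ℝ) * (1/4)^n := by positivity
    obtain ⟨_, ⟨h, hh, rfl⟩, hlt⟩ := exists_lt_of_csInf_lt hAne (lt_add_of_pos_right (sInf A) hpos)
    refine ⟨h, hh, fun c hc => ?_⟩
    have : sInf A ≤ ‖s + (1/2 : ℝ)^n • c‖ := csInf_le hbdd ⟨c, hc, rfl⟩
    simp only at hlt
    linarith
  choose F hFm hFle using hF
  let s : ℕ → (E →L[ℝ] ℝ) := fun n =>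
    Nat.rec 0 (fun n s => s + (1/2 : ℝ)^(n+1) • F n s) n
  have hs0 : s 0 = 0 := rfl
  have hss : ∀ n, s (n+1) = s n + (1/2 : ℝ)^(n+1) • F n (s n) := fun n => rfl
  set h : ℕ → (E →L[ℝ] ℝ) := fun n => F n (s n) with hh
  have hCM : ∀ n, ∀ c ∈ convexHull ℝ (g '' {k | n ≤ k}), ‖c‖ ≤ M := by
    intro n c hc
    have : convexHull ℝ (g '' {k | n ≤ k}) ⊆ Metric.closedBall 0 M :=
      convexHull_min (by rintro _ ⟨k, _, rfl⟩; simpa using hM k) (convex_closedBall _ _)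
    simpa using this hc
  have hcau : CauchySeq s := by
    refine cauchySeq_of_le_geometric (1/2) (1/2*M) (by norm_num) fun n => ?_
    rw [dist_eq_norm, hss, sub_add_cancel_left, norm_neg, norm_smul, norm_pow]
    have := hCM n _ (hFm n (s n))
    rw [show ‖(1/2:ℝ)‖ = 1/2 by norm_num, pow_succ]
    have h2 : (0:ℝ) ≤ (1/2)^n * (1/2) := by positivity
    nlinarith [mul_le_mul_of_nonneg_left this h2]
  obtain ⟨l, hl⟩ := cauchySeq_tendsto_of_complete hcau
  have htel : ∀ n m : ℕ, ∀ c ∈ convexHull ℝ (g '' {k | n + m ≤ k}),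
      ∃ c' ∈ convexHull ℝ (g '' {k | n ≤ k}),
        s (n+m) + (1/2 : ℝ)^(n+m) • c = s n + (1/2 : ℝ)^n • c' := by
    intro n m
    induction m with
    | zero => exact fun c hc => ⟨c, hc, rfl⟩
    | succ m ih =>
      intro c hc
      have hc1 : c ∈ convexHull ℝ (g '' {k | n + m ≤ k}) :=
        convexHull_mono (Set.image_mono fun k (hk : n + (m+1) ≤ k) =>
          show n + m ≤ k by omega) hc
      obtain ⟨c', hc', he⟩ := ih ((1/2 : ℝ) • h (n+m) + (1/2 : ℝ) • c)
        (convex_convexHull ℝ _ (hFm _ _) hc1 (by norm_num) (by norm_num) (by norm_num))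
      refine ⟨c', hc', ?_⟩
      rw [← he, ← add_assoc, hss, pow_succ]
      module
  -- the approximants
  set p : ℕ → (E →L[ℝ] ℝ) := fun N => s N + (1/2 : ℝ)^N • g N with hp
  have hpl : Tendsto p atTop (nhds l) := by
    have h0 : Tendsto (fun N => (1/2 : ℝ)^N • g N) atTop (nhds 0) := by
      refine squeeze_zero_norm (a := fun N => (1/2:ℝ)^N * M) (fun N => ?_) ?_
      · rw [norm_smul, norm_pow, show ‖(1/2:ℝ)‖ = 1/2 by norm_num]
        exact mul_le_mul_of_nonneg_left (hM N) (by positivity)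
      · simpa using (tendsto_pow_atTop_nhds_zero_of_lt_one (r := (1/2:ℝ)) (by norm_num)
          (by norm_num)).mul_const M
    have h1 := hl.add h0
    rw [add_zero] at h1
    exact h1
  have hpc : ∀ n N, n ≤ N → ∃ c' ∈ convexHull ℝ (g '' {k | n ≤ k}),
      p N = s n + (1/2 : ℝ)^n • c' := by
    intro n N hN
    obtain ⟨m, rfl⟩ := Nat.exists_eq_add_of_le hN
    exact htel n m _ (hne _)
  have hl1 : 1 ≤ ‖l‖ := by
    refine ge_of_tendsto' hpl.norm fun N => ?_
    obtain ⟨c, hc, he⟩ := hpc 0 N (Nat.zero_le _)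
    rw [he, hs0]
    simpa using hlow c hc
  have hmin : ∀ n, ‖s n + (1/2:ℝ)^n • h n‖ ≤ ‖l‖ + (1/4 : ℝ) * (1/4)^n := by
    intro n
    refine ge_of_tendsto (hpl.norm.add_const _) ?_
    filter_upwards [eventually_ge_atTop n] with N hN
    obtain ⟨c, hc, he⟩ := hpc n N hN
    rw [he]
    exact hFle n (s n) c hc
  obtain ⟨b, hb1, hb⟩ := hsup l
  have hlb : ‖l‖ ≤ l b := by
    have hb0 : 0 ≤ l b := by simpa using hb 0 (by simp)
    refine l.opNorm_le_of_unit_norm hb0 fun y hy => ?_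
    rw [Real.norm_eq_abs]
    refine abs_le'.2 ⟨hb y hy.le, ?_⟩
    simpa using hb (-y) (by simp [hy])
  have hstep : ∀ n, (l b - s n b) ≤ 2 * (l b - s (n+1) b) + (1/4 : ℝ) * (1/4)^n := by
    intro n
    have h1 : (s n + (1/2:ℝ)^n • h n) b ≤ ‖s n + (1/2:ℝ)^n • h n‖ :=
      (le_abs_self _).trans (((s n + (1/2:ℝ)^n • h n).le_opNorm b).trans
        (mul_le_of_le_one_right (norm_nonneg _) hb1))
    have h2 := hmin n
    have h3 : s (n+1) b = s n b + (1/2:ℝ)^(n+1) * h n b := by rw [hss]; rfl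
    have h4 : (s n + (1/2:ℝ)^n • h n) b = s n b + (1/2:ℝ)^n * h n b := rfl
    rw [h4] at h1
    rw [h3, pow_succ]
    linarith
  have hind : ∀ n, 1/2 + 1/2 * (1/2:ℝ)^n ≤ 2^n * (l b - s n b) := by
    intro n
    induction n with
    | zero => rw [hs0]; simp; linarith
    | succ n ih =>
      have h1 := mul_le_mul_of_nonneg_left (hstep n) (show (0:ℝ) ≤ 2^n by positivity)
      have h2 : (2:ℝ)^n * ((1/4 : ℝ) * (1/4)^n) = 1/4 * (1/2)^n := by
        rw [show (1/2:ℝ) = 2 * (1/4) by norm_num, mul_pow]; ring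
      rw [mul_add, h2] at h1
      rw [pow_succ, pow_succ]
      linarith
  have hev : ∀ᶠ k in atTop, g k b < 1/4 := (hlim b).eventually_lt_const (by norm_num)
  obtain ⟨n, hn⟩ := eventually_atTop.1 hev
  have hcb : ∀ c ∈ convexHull ℝ (g '' {k | n ≤ k}), c b ≤ 1/4 := by
    intro c hc
    have hsub : convexHull ℝ (g '' {k | n ≤ k}) ⊆ {c : E →L[ℝ] ℝ | c b ≤ 1/4} := by
      refine convexHull_min (by rintro _ ⟨k, hk, rfl⟩; exact (hn k hk).le) ?_
      exact convex_halfSpace_le ⟨fun _ _ => rfl, fun _ _ => rfl⟩ _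
    exact hsub hc
  have hup : l b ≤ s n b + (1/2:ℝ)^n * (1/4) := by
    have hpb : Tendsto (fun N => p N b) atTop (nhds (l b)) :=
      ((ContinuousLinearMap.apply ℝ ℝ b).continuous.tendsto l).comp hpl
    refine le_of_tendsto hpb ?_
    filter_upwards [eventually_ge_atTop n] with N hN
    obtain ⟨c, hc, he⟩ := hpc n N hN
    rw [he]
    change s n b + (1/2:ℝ)^n * c b ≤ _
    have := mul_le_mul_of_nonneg_left (hcb c hc) (show (0:ℝ) ≤ (1/2)^n by positivity)
    linarith
  have h5 := hind n
  have h6 : (2:ℝ)^n * (l b - s n b) ≤ 2^n * ((1/2:ℝ)^n * (1/4)) :=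
    mul_le_mul_of_nonneg_left (by linarith) (by positivity)
  have h7 : (2:ℝ)^n * ((1/2:ℝ)^n * (1/4)) = 1/4 := by
    rw [← mul_assoc, ← mul_pow]; norm_num
  have h8 : (0:ℝ) ≤ (1/2)^n := by positivity
  linarith

open Pointwise in
lemma exists_functional {E : Type*} [NormedAddCommGroup E] [NormedSpace ℝ E]
    (V : Submodule ℝ E) (C : Set E) (hC : Convex ℝ C) (ϑ : ℝ) (hϑ : 0 < ϑ)
    (hd : ∀ x ∈ (V : Set E), ∀ y ∈ C, ϑ ≤ ‖x - y‖) :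
    ∃ f : E →L[ℝ] ℝ, ‖f‖ ≤ 2 / ϑ ∧ (∀ x ∈ V, f x = 0) ∧ ∀ y ∈ C, 1 ≤ f y := by
  have hdis : Disjoint ((V : Set E) + Metric.ball (0:E) ϑ) C := by
    rw [Set.disjoint_left]
    rintro _ ⟨x, hx, z, hz, rfl⟩ hy
    have := hd x hx _ hy
    simp at this hz
    linarith
  obtain ⟨f, u, hfu, hfC⟩ := geometric_hahn_banach_open
    (V.convex.add (convex_ball (0:E) ϑ)) (Metric.isOpen_ball.add_left) hC hdis
  have hu : 0 < u := by
    simpa using hfu 0 ⟨0, V.zero_mem, 0, by simpa using hϑ, by simp⟩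
  have hV : ∀ x ∈ V, f x = 0 := by
    intro x hx
    by_contra hne
    have := hfu ((u / f x) • x) ⟨_, V.smul_mem (u / f x) hx, 0, by simpa using hϑ, by simp⟩
    rw [map_smul, smul_eq_mul, div_mul_cancel₀ _ hne] at this
    exact lt_irrefl _ this
  refine ⟨u⁻¹ • f, ?_, fun x hx => by simp [hV x hx], fun y hy => ?_⟩
  · refine ContinuousLinearMap.opNorm_le_of_unit_norm (by positivity) fun y hy => ?_
    have hball : ∀ t : ℝ, |t| < ϑ → t * f y < u := by
      intro t ht
      have := hfu (t • y) ⟨0, V.zero_mem, t • y, by simpa [norm_smul, hy] using ht, by simp⟩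
      simpa using this
    have h1 := hball (ϑ/2) (by rw [abs_of_pos (by positivity)]; linarith)
    have h2 := hball (-(ϑ/2)) (by rw [abs_neg, abs_of_pos (by positivity)]; linarith)
    have h3 : |f y| ≤ 2 / ϑ * u := by
      have h4 : |f y| * (ϑ/2) ≤ u := by
        rw [← abs_of_pos (show 0 < ϑ/2 by positivity), ← abs_mul]
        exact abs_le'.2 ⟨by linarith, by linarith⟩
      rw [div_mul_eq_mul_div, le_div_iff₀ hϑ]
      linarith
    change ‖u⁻¹ * f y‖ ≤ _
    rw [norm_mul, Real.norm_eq_abs, Real.norm_eq_abs, abs_of_pos (inv_pos.2 hu),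
      inv_mul_le_iff₀ hu]
    linarith
  · change 1 ≤ u⁻¹ * f y
    rw [le_inv_mul_iff₀ hu]
    simpa using hfC y hy

/-- James' sup theorem for separable normed spaces: a separable normed space in which
every continuous functional attains its supremum on the unit ball is J-reflexive. -/
theorem james_sup_separable {E : Type*} [NormedAddCommGroup E] [NormedSpace ℝ E]
    [TopologicalSpace.SeparableSpace E]
    (hsup : ∀ f : E →L[ℝ] ℝ, ∃ x : E, ‖x‖ ≤ 1 ∧ ∀ y : E, ‖y‖ ≤ 1 → f y ≤ f x) :
    ¬ ∃ (a : ℕ → E) (ϑ : ℝ), 0 < ϑ ∧ (∀ n, ‖a n‖ ≤ 1) ∧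
      ∀ n : ℕ, ∀ x ∈ (Submodule.span ℝ (a '' {i | i < n}) : Set E),
        ∀ y ∈ convexHull ℝ (a '' {i | n ≤ i}), ϑ ≤ ‖x - y‖ := by
  rintro ⟨a, ϑ, hϑ, ha, hd⟩
  choose f hfn hf0 hf1 using fun n =>
    exists_functional _ _ (convex_convexHull ℝ (a '' {i | n ≤ i})) ϑ hϑ (hd n)
  have hf0' : ∀ n i, i < n → f n (a i) = 0 := fun n i hi =>
    hf0 n _ (Submodule.subset_span ⟨i, hi, rfl⟩)
  have hf1' : ∀ n i, n ≤ i → 1 ≤ f n (a i) := fun n i hi =>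
    hf1 n _ (subset_convexHull ℝ _ ⟨i, hi, rfl⟩)
  obtain ⟨l', hl', φ, hφ, hlim⟩ := WeakDual.isSeqCompact_closedBall ℝ E 0 (2/ϑ)
    (x := fun n => StrongDual.toWeakDual (f n)) (fun n => by simpa using hfn n)
  have hlim' : ∀ x, Tendsto (fun k => f (φ k) x) atTop (nhds (l' x)) := fun x =>
    ((WeakDual.eval_continuous x).tendsto l').comp hlim
  set l : E →L[ℝ] ℝ := WeakDual.toStrongDual l' with hl
  have hl0 : ∀ i, l (a i) = 0 := by
    intro i
    refine tendsto_nhds_unique (hlim' (a i)) (tendsto_const_nhds.congr' ?_)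
    filter_upwards [eventually_gt_atTop i] with k hk
    exact (hf0' _ _ (hk.trans_le hφ.le_apply)).symm
  refine simons_aux hsup (fun k => f (φ k) - l) (2/ϑ + ‖l‖)
    (fun k => (norm_sub_le _ _).trans (by linarith [hfn (φ k)])) ?_ ?_
  · intro c hc
    have hsub : convexHull ℝ ((fun k => f (φ k) - l) '' {k | 0 ≤ k}) ⊆
        {c : E →L[ℝ] ℝ | ∃ N, ∀ i ≥ N, 1 ≤ c (a i)} := by
      refine convexHull_min ?_ ?_
      · rintro _ ⟨k, _, rfl⟩
        refine ⟨φ k, fun i hi => ?_⟩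
        simpa [hl0 i] using hf1' _ _ hi
      · rintro c₁ ⟨N₁, h₁⟩ c₂ ⟨N₂, h₂⟩ α β hα hβ hαβ
        refine ⟨max N₁ N₂, fun i hi => ?_⟩
        have e₁ := h₁ i ((le_max_left _ _).trans hi)
        have e₂ := h₂ i ((le_max_right _ _).trans hi)
        change 1 ≤ α * c₁ (a i) + β * c₂ (a i)
        nlinarith
    obtain ⟨N, hN⟩ := hsub hc
    exact (hN N le_rfl).trans ((le_abs_self _).trans ((c.le_opNorm _).trans
      (mul_le_of_le_one_right (norm_nonneg _) (ha N))))
  · intro b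
    have h1 := (hlim' b).sub_const (l b)
    rw [show l' b - l b = 0 from sub_self (l b)] at h1
    exact h1
end

section
/- Let E be a sup-reflexive normed space (every f ∈ E' attains its supremum on the closed unit ball). If the closed unit ball of E' is weak-star block compact, then E is J-reflexive. (Assume the Hahn–Banach theorem.) -/
open Filter

theorem diagSets (M0 : Set ℕ) (hM0 : M0.Infinite) (Q : ℕ → Set ℕ → Prop)
    (mono : ∀ j M L, (L \ M).Finite → Q j M → Q j L)
    (h : ∀ j, ∀ M, M ⊆ M0 → M.Infinite → ∃ M', M' ⊆ M ∧ M'.Infinite ∧ Q j M') :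
    ∃ L, L ⊆ M0 ∧ L.Infinite ∧ ∀ j, Q j L := by
  choose! nx h1 h2 h3 using h
  let M : ℕ → Set ℕ := fun n => Nat.rec M0 (fun j S => nx j S) n
  have hM : ∀ n, M n ⊆ M0 ∧ (M n).Infinite := by
    intro n
    induction n with
    | zero => exact ⟨subset_rfl, hM0⟩
    | succ k ih => exact ⟨(h1 k _ ih.1 ih.2).trans ih.1, h2 k _ ih.1 ih.2⟩
  have hanti : Antitone M := antitone_nat_of_succ_le fun n => h1 n _ (hM n).1 (hM n).2
  obtain ⟨φ, hφ, hφM⟩ := extraction_forall_of_frequently (P := fun n k => k ∈ M n)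
    (fun n => Nat.frequently_atTop_iff_infinite.2 (hM n).2)
  refine ⟨Set.range φ, ?_, Set.infinite_range_of_injective hφ.injective, ?_⟩
  · rintro _ ⟨n, rfl⟩
    exact (hM n).1 (hφM n)
  · intro j
    refine mono j (M (j+1)) _ ?_ (h3 j _ (hM j).1 (hM j).2)
    refine ((Set.finite_Iio (j+1)).image φ).subset ?_
    rintro _ ⟨⟨n, rfl⟩, hn⟩
    refine ⟨n, ?_, rfl⟩
    by_contra hlt
    exact hn (hanti (not_lt.1 hlt) (hφM n))

/-- The pairs `(S true n, S false n)`, `n ∈ L`, converge on `Y`. -/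
def PairCv {X : Type*} (S : Bool → ℕ → Set X) (L : Set ℕ) (Y : Set X) : Prop :=
  ∀ x ∈ Y, ∃ b, {n | n ∈ L ∧ x ∈ S b n}.Finite

theorem PairCv.mono {X : Type*} {S : Bool → ℕ → Set X} {L M : Set ℕ} {Y : Set X}
    (hLM : (L \ M).Finite) (h : PairCv S M Y) : PairCv S L Y := by
  intro x hx
  obtain ⟨b, hb⟩ := h x hx
  refine ⟨b, (hb.union hLM).subset ?_⟩
  rintro n ⟨hn, hn'⟩
  by_cases hm : n ∈ M
  · exact Or.inl ⟨hm, hn'⟩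
  · exact Or.inr ⟨hn, hm⟩

/-- No infinite subset of `M` converges on `Y`. -/
def PairBad {X : Type*} (S : Bool → ℕ → Set X) (M : Set ℕ) (Y : Set X) : Prop :=
  ∀ L, L ⊆ M → L.Infinite → ¬ PairCv S L Y

theorem pair_step {X : Type*} (S : Bool → ℕ → Set X) (T : Set (Set X)) (hT : T.Finite)
    (M : Set ℕ) (hM : M.Infinite) (hbad : ∀ Y ∈ T, PairBad S M Y) :
    ∃ j, ∃ M', M' ⊆ M ∧ M'.Infinite ∧ ∀ Y ∈ T, ∀ b, PairBad S M' (Y ∩ S b j) := by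
  by_contra hcon
  push Not at hcon
  obtain ⟨L, hLM, hL, hQ⟩ := diagSets M hM
    (fun j L => ∃ Y ∈ T, ∃ b, PairCv S L (Y ∩ S b j))
    (by
      rintro j M L hLM ⟨Y, hY, b, h⟩
      exact ⟨Y, hY, b, h.mono hLM⟩)
    (by
      intro j M' hM' hinf
      obtain ⟨Y, hY, b, h⟩ := hcon j M' hM' hinf
      unfold PairBad at h
      push Not at h
      obtain ⟨L, h1, h2, h3⟩ := h
      exact ⟨L, h1, h2, Y, hY, b, h3⟩)
  choose Yf hYT bf hcv using hQ
  -- pigeonhole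
  have hfin : (T ×ˢ (Set.univ : Set Bool)).Finite := hT.prod Set.finite_univ
  obtain ⟨p, hp, hpinf⟩ : ∃ p ∈ T ×ˢ (Set.univ : Set Bool),
      {n | n ∈ L ∧ (Yf n, bf n) = p}.Infinite := by
    by_contra hno
    push Not at hno
    refine hL ((hfin.biUnion hno).subset ?_)
    intro n hn
    simp only [Set.mem_iUnion]
    exact ⟨(Yf n, bf n), ⟨hYT n, trivial⟩, hn, rfl⟩
  obtain ⟨Y, b⟩ := p
  set L' : Set ℕ := {n | n ∈ L ∧ (Yf n, bf n) = (Y, b)} with hL'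
  refine hbad Y hp.1 L' (fun n hn => hLM hn.1) hpinf ?_
  intro x hx
  by_cases hex : ∃ n ∈ L', x ∈ S b n
  · obtain ⟨n, hn, hxn⟩ := hex
    have hc := hcv n
    have h2 := hn.2
    simp only [Prod.mk.injEq] at h2
    rw [h2.1, h2.2] at hc
    obtain ⟨b', hb'⟩ := hc x ⟨hx, hxn⟩
    exact ⟨b', hb'.subset fun n hn => ⟨hn.1.1, hn.2⟩⟩
  · refine ⟨b, ?_⟩
    push Not at hex
    convert Set.finite_empty
    ext n
    simp only [Set.mem_ofPred_eq, Set.mem_empty_iff_false, iff_false, not_and]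
    exact hex n

theorem pair_indep {X : Type*} (S : Bool → ℕ → Set X) (M : Set ℕ) (hM : M.Infinite)
    (hbad : PairBad S M Set.univ) :
    ∃ j : ℕ → ℕ, ∀ σ : ℕ → Bool, ∀ N, ∃ x, ∀ i < N, x ∈ S (σ i) (j i) := by
  classical
  let St := {p : Set (Set X) × Set ℕ // p.1.Finite ∧ p.2.Infinite ∧ ∀ Y ∈ p.1, PairBad S p.2 Y}
  have step : ∀ p : St, ∃ (j : ℕ) (q : St), ∀ Y ∈ p.1.1, ∀ b, Y ∩ S b j ∈ q.1.1 := by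
    rintro ⟨⟨T, M⟩, h1, h2, h3⟩
    obtain ⟨j, M', hM', hinf, hb⟩ := pair_step S T h1 M h2 h3
    refine ⟨j, ⟨⟨⋃ b, (fun Y => Y ∩ S b j) '' T, M'⟩, ?_, hinf, ?_⟩, ?_⟩
    · exact Set.finite_iUnion fun b => h1.image _
    · intro Y hY
      simp only [Set.mem_iUnion] at hY
      obtain ⟨b, Y', hY', rfl⟩ := hY
      exact hb Y' hY' b
    · intro Y hY b
      exact Set.mem_iUnion.2 ⟨b, Y, hY, rfl⟩
  choose jf nx hnx using step
  let p0 : St := ⟨⟨{Set.univ}, M⟩, Set.finite_singleton _, hM, by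
    rintro Y rfl; exact hbad⟩
  let p : ℕ → St := fun n => Nat.rec p0 (fun _ s => nx s) n
  refine ⟨fun n => jf (p n), fun σ N => ?_⟩
  have key : ∀ N, ∃ Y ∈ (p N).1.1, ∀ x ∈ Y, ∀ i < N, x ∈ S (σ i) (jf (p i)) := by
    intro N
    induction N with
    | zero => exact ⟨Set.univ, rfl, by simp⟩
    | succ N ih =>
      obtain ⟨Y, hY, h⟩ := ih
      refine ⟨Y ∩ S (σ N) (jf (p N)), hnx (p N) Y hY _, ?_⟩
      rintro x ⟨hx1, hx2⟩ i hi
      rcases Nat.lt_succ_iff_lt_or_eq.1 hi with h' | rfl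
      · exact h x hx1 i h'
      · exact hx2
  obtain ⟨Y, hY, h⟩ := key N
  have hne : Y.Nonempty := by
    by_contra hemp
    rw [Set.not_nonempty_iff_eq_empty] at hemp
    subst hemp
    exact (p N).2.2.2 _ hY _ subset_rfl (p N).2.2.1 (fun x hx => hx.elim)
  obtain ⟨x, hx⟩ := hne
  exact ⟨x, h x hx⟩

/-- Rosenthal's dichotomy. -/
theorem rosenthal_dichotomy {X : Type*} (f : ℕ → X → ℝ) (C : ℝ) (hf : ∀ n x, |f n x| ≤ C) :
    (∃ φ : ℕ → ℕ, StrictMono φ ∧ ∀ x, ∃ c, Tendsto (fun n => f (φ n) x) atTop (nhds c)) ∨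
    (∃ (j : ℕ → ℕ) (r s : ℝ), r < s ∧ ∀ σ : ℕ → Bool, ∀ N, ∃ x, ∀ i < N,
      (σ i = true → s < f (j i) x) ∧ (σ i = false → f (j i) x < r)) := by
  let S : ℚ × ℚ → Bool → ℕ → Set X := fun p b n =>
    if b then {x | (p.2 : ℝ) < f n x} else {x | f n x < (p.1 : ℝ)}
  by_cases hex : ∃ p : ℚ × ℚ, p.1 < p.2 ∧ ∃ M : Set ℕ, M.Infinite ∧ PairBad (S p) M Set.univ
  · right
    obtain ⟨p, hp, M, hM, hbad⟩ := hex
    obtain ⟨j, hj⟩ := pair_indep (S p) M hM hbad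
    refine ⟨j, p.1, p.2, by exact_mod_cast hp, fun σ N => ?_⟩
    obtain ⟨x, hx⟩ := hj σ N
    refine ⟨x, fun i hi => ⟨fun h => ?_, fun h => ?_⟩⟩
    · have := hx i hi
      rw [h] at this
      simpa [S] using this
    · have := hx i hi
      rw [h] at this
      simpa [S] using this
  · left
    push Not at hex
    obtain ⟨L, -, hL, hQ⟩ := diagSets Set.univ Set.infinite_univ
      (fun j L => ∀ p : ℚ × ℚ, Encodable.encode p = j → p.1 < p.2 → PairCv (S p) L Set.univ)
      (fun j M L hLM h p hp hlt => (h p hp hlt).mono hLM)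
      (by
        intro j M _ hM
        by_cases hj : ∃ p : ℚ × ℚ, Encodable.encode p = j ∧ p.1 < p.2
        · obtain ⟨p, hp, hlt⟩ := hj
          have := hex p hlt M hM
          unfold PairBad at this
          push Not at this
          obtain ⟨L, h1, h2, h3⟩ := this
          refine ⟨L, h1, h2, fun q hq _ => ?_⟩
          have : q = p := Encodable.encode_injective (hq.trans hp.symm)
          rw [this]; exact h3
        · exact ⟨M, subset_rfl, hM, fun p hp hlt => (hj ⟨p, hp, hlt⟩).elim⟩)
    obtain ⟨φ, hφ, hφL⟩ := extraction_of_frequently_atTop (P := fun n => n ∈ L)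
      (Nat.frequently_atTop_iff_infinite.2 hL)
    refine ⟨φ, hφ, fun x => ?_⟩
    refine tendsto_of_no_upcrossings (s := Set.range ((↑) : ℚ → ℝ)) Rat.denseRange_cast ?_ ?_ ?_
    · rintro _ ⟨a, rfl⟩ _ ⟨b, rfl⟩ hab ⟨h1, h2⟩
      obtain ⟨c, hc⟩ := hQ _ (a, b) rfl (by exact_mod_cast hab) x trivial
      rw [Nat.frequently_atTop_iff_infinite] at h1 h2
      have i1 := h1.image (f := φ) hφ.injective.injOn
      have i2 := h2.image (f := φ) hφ.injective.injOn
      cases c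
      · refine i1 (hc.subset ?_)
        rintro _ ⟨n, hn, rfl⟩
        exact ⟨hφL n, by simpa [S] using hn⟩
      · refine i2 (hc.subset ?_)
        rintro _ ⟨n, hn, rfl⟩
        exact ⟨hφL n, by simpa [S] using hn⟩
    · exact isBoundedUnder_of ⟨C, fun n => (abs_le.1 (hf _ _)).2⟩
    · exact isBoundedUnder_of ⟨-C, fun n => (abs_le.1 (hf _ _)).1⟩

/-- Special case of Simons' inequality. -/
theorem simons_zero {E : Type*} [NormedAddCommGroup E] [NormedSpace ℝ E]
    (hsup : ∀ f : E →L[ℝ] ℝ, ∃ x : E, ‖x‖ ≤ 1 ∧ ∀ y : E, ‖y‖ ≤ 1 → f y ≤ f x)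
    (g : ℕ → E →L[ℝ] ℝ) (M : ℝ) (hM : ∀ n, ‖g n‖ ≤ M)
    (hg : ∀ x, Tendsto (fun n => g n x) atTop (nhds 0)) (δ : ℝ) (hδ : 0 < δ)
    (hconv : ∀ h ∈ convexHull ℝ (Set.range g), δ ≤ ‖h‖) : False := by
  let C : ℕ → Set (E →L[ℝ] ℝ) := fun n => convexHull ℝ (g '' {p | n ≤ p})
  have hCanti : ∀ m n, m ≤ n → C n ⊆ C m := fun m n hmn =>
    convexHull_mono (Set.image_mono fun p hp => le_trans hmn hp)
  have hCne : ∀ n, (C n).Nonempty := fun n =>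
    ⟨g n, subset_convexHull ℝ _ ⟨n, le_refl n, rfl⟩⟩
  have hCconv : ∀ n, Convex ℝ (C n) := fun n => convex_convexHull ℝ _
  have hchoose : ∀ n (u : E →L[ℝ] ℝ), ∃ h ∈ C n, ∀ h' ∈ C n,
      ‖u + (2 * (1/2 : ℝ)^n) • h‖ ≤ ‖u + (2 * (1/2 : ℝ)^n) • h'‖ + (1/4 : ℝ)^n * (δ/2) := by
    intro n u
    let T : Set ℝ := (fun h => ‖u + (2 * (1/2 : ℝ)^n) • h‖) '' C n
    have hTne : T.Nonempty := (hCne n).image _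
    have hTb : BddBelow T := ⟨0, by rintro _ ⟨h, _, rfl⟩; exact norm_nonneg _⟩
    have hpos : 0 < (1/4 : ℝ)^n * (δ/2) := by positivity
    obtain ⟨_, ⟨h, hh, rfl⟩, hlt⟩ := Real.lt_sInf_add_pos hTne hpos
    refine ⟨h, hh, fun h' hh' => ?_⟩
    have := csInf_le hTb ⟨h', hh', rfl⟩
    simp only at this hlt
    linarith
  choose H hHC hHmin using hchoose
  let u : ℕ → E →L[ℝ] ℝ := fun n => Nat.rec 0 (fun n u => u + ((1/2 : ℝ)^n) • H n u) n
  have hu0 : u 0 = 0 := rfl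
  have hus : ∀ n, u (n+1) = u n + ((1/2 : ℝ)^n) • H n (u n) := fun n => rfl
  generalize u = u at hu0 hus
  set h : ℕ → E →L[ℝ] ℝ := fun n => H n (u n) with hh
  have hhC : ∀ n, h n ∈ C n := fun n => hHC n _
  have hhn : ∀ n, ‖h n‖ ≤ M := by
    intro n
    have : C n ⊆ Metric.closedBall 0 M := by
      refine convexHull_min ?_ (convex_closedBall _ _)
      rintro _ ⟨p, _, rfl⟩
      simpa using hM p
    simpa using this (hhC n)
  have hcauchy : CauchySeq u := by
    refine cauchySeq_of_le_geometric (1/2) M (by norm_num) fun n => ?_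
    rw [dist_eq_norm, hus]
    simp only [sub_add_cancel_left, norm_neg, norm_smul, norm_pow]
    rw [mul_comm]
    have : ‖(1/2 : ℝ)‖ = 1/2 := by norm_num
    rw [this]
    exact mul_le_mul_of_nonneg_right (hhn n) (by positivity)
  obtain ⟨U, hU⟩ := cauchySeq_tendsto_of_complete hcauchy
  have hpow : Tendsto (fun n : ℕ => (1/2 : ℝ)^n) atTop (nhds 0) :=
    tendsto_pow_atTop_nhds_zero_of_lt_one (by norm_num) (by norm_num)
  have hU' : Tendsto (fun m => u m + (2 * (1/2 : ℝ)^m) • h m) atTop (nhds U) := by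
    have h0 : Tendsto (fun m => (2 * (1/2 : ℝ)^m) • h m) atTop (nhds 0) := by
      refine squeeze_zero_norm (a := fun m => 2 * (1/2 : ℝ)^m * M) (fun m => ?_) ?_
      · rw [norm_smul, Real.norm_of_nonneg (by positivity)]
        exact mul_le_mul_of_nonneg_left (hhn m) (by positivity)
      · simpa using (hpow.const_mul 2).mul_const M
    simpa using hU.add h0
  have hrep : ∀ n k, ∀ w ∈ C (n + k), ∃ w' ∈ C n,
      u (n + k) + (2 * (1/2 : ℝ)^(n+k)) • w = u n + (2 * (1/2 : ℝ)^n) • w' := by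
    intro n k
    induction k with
    | zero => intro w hw; exact ⟨w, hw, rfl⟩
    | succ k ih =>
      intro w hw
      obtain ⟨w', hw', he⟩ := ih ((1/2 : ℝ) • h (n+k) + (1/2 : ℝ) • w)
        (hCconv _ (hhC _) (hCanti _ _ (by omega) hw) (by norm_num) (by norm_num) (by norm_num))
      refine ⟨w', hw', ?_⟩
      rw [← he, ← add_assoc, hus]
      change u (n+k) + (1/2 : ℝ)^(n+k) • h (n+k) + _ = _
      rw [pow_succ]
      module
  have hA : ∀ n, ‖u n + (2 * (1/2 : ℝ)^n) • h n‖ ≤ ‖U‖ + (1/4 : ℝ)^n * (δ/2) := by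
    intro n
    refine ge_of_tendsto (hU'.norm.add_const _) ?_
    filter_upwards [eventually_ge_atTop n] with m hm
    obtain ⟨k, rfl⟩ := Nat.exists_eq_add_of_le hm
    obtain ⟨w', hw', he⟩ := hrep n k (h (n+k)) (hhC _)
    rw [he]
    exact hHmin n (u n) w' hw'
  have hU0 : 2 * δ ≤ ‖U‖ := by
    refine ge_of_tendsto' hU'.norm fun m => ?_
    obtain ⟨w', hw', he⟩ := hrep 0 m (h (0+m)) (hhC _)
    rw [zero_add] at he
    rw [he, hu0, zero_add, norm_smul, Real.norm_of_nonneg (by positivity)]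
    have := hconv w' (convexHull_mono (Set.image_subset_range _ _) hw')
    simp only [pow_zero]
    linarith
  have hD : ∀ n, (1/2 : ℝ)^n * (δ + δ * (1/2 : ℝ)^n) ≤ ‖U‖ - ‖u n‖ := by
    intro n
    induction n with
    | zero => rw [hu0]; simp; linarith
    | succ n ih =>
      have he : u (n+1) = (1/2 : ℝ) • (u n + (2 * (1/2 : ℝ)^n) • h n) + (1/2 : ℝ) • u n := by
        rw [hus]
        change u n + (1/2 : ℝ)^n • h n = _
        module
      have h1 : ‖u (n+1)‖ ≤ 1/2 * ‖u n + (2 * (1/2 : ℝ)^n) • h n‖ + 1/2 * ‖u n‖ := by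
        rw [he]
        refine (norm_add_le _ _).trans ?_
        rw [norm_smul, norm_smul, Real.norm_of_nonneg (by norm_num : (0:ℝ) ≤ 1/2)]
      have h2 := hA n
      have h4 : (1/4 : ℝ)^n = (1/2 : ℝ)^n * (1/2 : ℝ)^n := by
        rw [← mul_pow]; norm_num
      rw [h4] at h2
      rw [pow_succ]
      nlinarith
  obtain ⟨x, hx1, hx⟩ := hsup U
  have hUx0 : 0 ≤ U x := by simpa using hx 0 (by simp)
  have hUx : ‖U‖ ≤ U x := by
    refine ContinuousLinearMap.opNorm_le_of_unit_norm hUx0 fun y hy => ?_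
    rw [Real.norm_eq_abs, abs_le]
    have h1 := hx y hy.le
    have h2 := hx (-y) (by rw [norm_neg]; exact hy.le)
    rw [map_neg] at h2
    constructor <;> linarith
  obtain ⟨N, hN⟩ := (Metric.tendsto_atTop.1 (hg x)) (δ/4) (by positivity)
  have hsmall : ∀ n, N ≤ n → h n x ≤ δ/4 := by
    intro n hn
    have : C n ⊆ {w : E →L[ℝ] ℝ | w x ≤ δ/4} := by
      refine convexHull_min ?_ ?_
      · rintro _ ⟨p, hp, rfl⟩
        have := hN p (le_trans hn hp)
        rw [Real.dist_eq, sub_zero] at this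
        exact (le_abs_self _).trans this.le
      · intro a ha b hb s t hs ht hst
        simp only [Set.mem_ofPred_eq, add_apply,
          smul_apply, smul_eq_mul] at *
        calc s * a x + t * b x ≤ s * (δ/4) + t * (δ/4) := by gcongr
          _ = δ/4 := by rw [← add_mul, hst, one_mul]
    exact this (hhC n)
  have htail : ∀ k, u (N+k) x ≤ u N x + (2 * (1/2:ℝ)^N - 2 * (1/2:ℝ)^(N+k)) * (δ/4) := by
    intro k
    induction k with
    | zero => simp
    | succ k ih =>
      rw [← add_assoc, hus]
      change (u (N+k) + (1/2 : ℝ)^(N+k) • h (N+k)) x ≤ _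
      have h1 := hsmall (N+k) (by omega)
      have h2 : (0:ℝ) < (1/2 : ℝ)^(N+k) := by positivity
      simp only [add_apply, smul_apply, smul_eq_mul]
      rw [pow_succ]
      nlinarith
  have hUtail : U x ≤ u N x + 2 * (1/2:ℝ)^N * (δ/4) := by
    have hev : Tendsto (fun m => u m x) atTop (nhds (U x)) :=
      ((ContinuousLinearMap.apply ℝ ℝ x).continuous.tendsto U).comp hU
    refine le_of_tendsto hev ?_
    filter_upwards [eventually_ge_atTop N] with m hm
    obtain ⟨k, rfl⟩ := Nat.exists_eq_add_of_le hm
    have h1 := htail k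
    have h2 : (0:ℝ) < (1/2 : ℝ)^(N+k) := by positivity
    nlinarith
  have hle : u N x ≤ ‖u N‖ := by
    have h1 := (u N).le_opNorm x
    have h2 : ‖u N‖ * ‖x‖ ≤ ‖u N‖ * 1 := mul_le_mul_of_nonneg_left hx1 (norm_nonneg _)
    have h3 := le_abs_self (u N x)
    rw [Real.norm_eq_abs] at h1
    linarith
  have hDN := hD N
  have hp : (0:ℝ) < (1/2 : ℝ)^N := by positivity
  have hp2 : 0 < (1/2 : ℝ)^N * (δ * (1/2 : ℝ)^N) := by positivity
  have hp3 : 0 < (1/2 : ℝ)^N * δ := by positivity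
  nlinarith

theorem simons_test {E : Type*} [NormedAddCommGroup E] [NormedSpace ℝ E]
    (hsup : ∀ f : E →L[ℝ] ℝ, ∃ x : E, ‖x‖ ≤ 1 ∧ ∀ y : E, ‖y‖ ≤ 1 → f y ≤ f x)
    (g : ℕ → E →L[ℝ] ℝ) (M : ℝ) (hM : ∀ n, ‖g n‖ ≤ M)
    (hg : ∀ x, Tendsto (fun n => g n x) atTop (nhds 0)) (θ : ℝ) (hθ : 0 < θ)
    (z : ℕ → E) (hz : ∀ n, ‖z n‖ ≤ 2) (hgz : ∀ n, ∀ᶠ N in atTop, θ ≤ g n (z N)) : False := by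
  refine simons_zero hsup g M hM hg (θ/2) (by positivity) fun h hh => ?_
  have hsub : convexHull ℝ (Set.range g) ⊆ {w : E →L[ℝ] ℝ | ∀ᶠ N in atTop, θ ≤ w (z N)} := by
    refine convexHull_min ?_ ?_
    · rintro _ ⟨n, rfl⟩
      exact hgz n
    · intro a ha b hb s t hs ht hst
      simp only [Set.mem_ofPred_eq] at ha hb ⊢
      filter_upwards [ha, hb] with N h1 h2
      simp only [add_apply, smul_apply, smul_eq_mul]
      calc θ = s * θ + t * θ := by rw [← add_mul, hst, one_mul]
        _ ≤ s * a (z N) + t * b (z N) := by gcongr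
  obtain ⟨N, hN⟩ := (show ∀ᶠ N in atTop, θ ≤ h (z N) from hsub hh).exists
  have h1 := h.le_opNorm (z N)
  have h2 : ‖h‖ * ‖z N‖ ≤ ‖h‖ * 2 := mul_le_mul_of_nonneg_left (hz N) (norm_nonneg _)
  have h3 := le_abs_self (h (z N))
  rw [Real.norm_eq_abs] at h1
  linarith

open Pointwise in
/-- Separation: a functional of norm at most one vanishing on a subspace and at least
`ϑ` on a convex set at distance at least `ϑ`. -/
theorem sep_functional {E : Type*} [NormedAddCommGroup E] [NormedSpace ℝ E]
    (V : Submodule ℝ E) (K : Set E) (hK : Convex ℝ K) (hKne : K.Nonempty)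
    (ϑ : ℝ) (hϑ : 0 < ϑ)
    (hd : ∀ x ∈ V, ∀ y ∈ K, ϑ ≤ ‖x - y‖) :
    ∃ f : E →L[ℝ] ℝ, ‖f‖ ≤ 1 ∧ (∀ x ∈ V, f x = 0) ∧ ∀ y ∈ K, ϑ ≤ f y := by
  -- separate the open ball of radius `ϑ` from `K + V`
  let W : Set E := K + (V : Set E)
  have hWc : Convex ℝ W := hK.add V.convex
  have hdisj : Disjoint (Metric.ball (0:E) ϑ) W := by
    rw [Set.disjoint_left]
    rintro w hw ⟨y, hy, v, hv, rfl⟩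
    have := hd (-v) (V.neg_mem hv) y hy
    rw [mem_ball_zero_iff] at hw
    have h2 : ‖-v - y‖ = ‖y + v‖ := by rw [← norm_neg]; congr 1; abel
    simp only at hw
    linarith
  obtain ⟨f, c, hf1, hf2⟩ := geometric_hahn_banach_open (convex_ball (0:E) ϑ)
    Metric.isOpen_ball hWc hdisj
  have hc : 0 < c := by simpa using hf1 0 (by simpa using hϑ)
  have hfb : ∀ x : E, ‖x‖ < ϑ → |f x| ≤ c := by
    intro x hx
    have h1 := hf1 x (by simpa using hx)
    have h2 := hf1 (-x) (by simpa using hx)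
    rw [map_neg] at h2
    rw [abs_le]; constructor <;> linarith
  have hfn : ‖f‖ ≤ c / ϑ := by
    refine ContinuousLinearMap.opNorm_le_of_unit_norm (by positivity) fun x hx => ?_
    rw [le_div_iff₀ hϑ, Real.norm_eq_abs]
    refine le_of_forall_lt_imp_le_of_dense fun q hq => ?_
    by_contra hcon
    push Not at hcon
    have hfx : 0 < |f x| := by
      by_contra h0
      have h0 : |f x| = 0 := le_antisymm (not_lt.1 h0) (abs_nonneg _)
      rw [h0] at hq; linarith
    -- choose radius
    have ht : q / |f x| < ϑ := by rw [div_lt_iff₀ hfx]; linarith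
    have hq0 : 0 < q := hc.trans hcon
    have := hfb ((q / |f x|) • x) (by
      rw [norm_smul, hx, mul_one, Real.norm_of_nonneg (by positivity)]; exact ht)
    rw [map_smul, smul_eq_mul, abs_mul, abs_of_nonneg (by positivity : 0 ≤ q / |f x|),
      div_mul_cancel₀ _ hfx.ne'] at this
    linarith
  have hfV : ∀ v ∈ V, f v = 0 := by
    intro v hv
    obtain ⟨y, hy⟩ := hKne
    by_contra hne
    have := hf2 (y + ((c - 1 - f y) / f v) • v) ⟨y, hy, _, V.smul_mem _ hv, rfl⟩
    rw [map_add, map_smul, smul_eq_mul, div_mul_cancel₀ _ hne] at this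
    linarith
  refine ⟨(ϑ / c) • f, ?_, ?_, ?_⟩
  · rw [norm_smul, Real.norm_of_nonneg (by positivity)]
    calc ϑ / c * ‖f‖ ≤ ϑ / c * (c / ϑ) := by gcongr
      _ = 1 := by field_simp
  · intro x hx; simp [hfV x hx]
  · intro y hy
    have := hf2 y ⟨y, hy, 0, V.zero_mem, by simp⟩
    simp only [smul_apply, smul_eq_mul]
    calc ϑ = ϑ / c * c := by field_simp
      _ ≤ ϑ / c * f y := by gcongr

/-- Theorem 1: a sup-reflexive normed space whose dual unit ball is weak-star block
compact is J-reflexive. -/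
theorem supReflexive_blockCompact_J_reflexive {E : Type*}
    [NormedAddCommGroup E] [NormedSpace ℝ E]
    (hsup : ∀ f : E →L[ℝ] ℝ, ∃ x : E, ‖x‖ ≤ 1 ∧ ∀ y : E, ‖y‖ ≤ 1 → f y ≤ f x)
    (hblockcompact : ∀ f : ℕ → E →L[ℝ] ℝ, (∀ n, ‖f n‖ ≤ 1) →
      ∃ (F : ℕ → Finset ℕ) (lam : ℕ → ℝ) (φ : E →L[ℝ] ℝ),
        (Pairwise fun m n => Disjoint (F m) (F n)) ∧
        (∀ n, ∑ i ∈ F n, |lam i| = 1) ∧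
        (∀ x : E, Tendsto (fun n => (∑ i ∈ F n, lam i • f i) x) atTop (nhds (φ x)))) :
    ¬ ∃ (a : ℕ → E) (ϑ : ℝ), 0 < ϑ ∧ (∀ n, ‖a n‖ ≤ 1) ∧
      ∀ n : ℕ, ∀ x ∈ (Submodule.span ℝ (a '' {i | i < n}) : Set E),
        ∀ y ∈ convexHull ℝ (a '' {i | n ≤ i}), ϑ ≤ ‖x - y‖ := by
  classical
  rintro ⟨a, ϑ, hϑ, ha, hd⟩
  have hsep : ∀ n, ∃ f : E →L[ℝ] ℝ, ‖f‖ ≤ 1 ∧ (∀ i < n, f (a i) = 0) ∧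
      ∀ i, n ≤ i → ϑ ≤ f (a i) := by
    intro n
    obtain ⟨f, h1, h2, h3⟩ := sep_functional (Submodule.span ℝ (a '' {i | i < n}))
      (convexHull ℝ (a '' {i | n ≤ i})) (convex_convexHull ℝ _)
      ⟨a n, subset_convexHull ℝ _ ⟨n, le_refl n, rfl⟩⟩ ϑ hϑ (hd n)
    exact ⟨f, h1, fun i hi => h2 _ (Submodule.subset_span ⟨i, hi, rfl⟩),
      fun i hi => h3 _ (subset_convexHull ℝ _ ⟨i, hi, rfl⟩)⟩
  choose f hfn hf0 hf1 using hsep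
  have hbd : ∀ n (x : E), |f n x| ≤ ‖x‖ := by
    intro n x
    have h1 := (f n).le_opNorm x
    have h2 : ‖f n‖ * ‖x‖ ≤ 1 * ‖x‖ := mul_le_mul_of_nonneg_right (hfn n) (norm_nonneg _)
    rw [Real.norm_eq_abs] at h1
    linarith
  rcases rosenthal_dichotomy (X := {x : E // ‖x‖ ≤ 1}) (fun n x => f n x.1) 1
    (fun n x => (hbd n x.1).trans x.2) with ⟨φ, hφ, hlim⟩ | ⟨j, r, s, hrs, hind⟩
  · have hlim' : ∀ x : E, ∃ c, Tendsto (fun n => f (φ n) x) atTop (nhds c) := by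
      intro x
      have hpos : 0 < ‖x‖ + 1 := by positivity
      obtain ⟨c, hc⟩ := hlim ⟨(‖x‖ + 1)⁻¹ • x, by
        rw [norm_smul, Real.norm_of_nonneg (by positivity), inv_mul_le_iff₀ hpos]; linarith⟩
      refine ⟨(‖x‖ + 1) * c, ?_⟩
      have := hc.const_mul (‖x‖ + 1)
      refine this.congr fun n => ?_
      simp only [map_smul, smul_eq_mul]
      rw [← mul_assoc, mul_inv_cancel₀ hpos.ne', one_mul]
    choose ψ0 hψ0 using hlim'
    let ψ : E →L[ℝ] ℝ := LinearMap.mkContinuous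
      { toFun := ψ0
        map_add' := fun x y => tendsto_nhds_unique (hψ0 (x + y)) (by
          simpa using (hψ0 x).add (hψ0 y))
        map_smul' := fun c x => tendsto_nhds_unique (hψ0 (c • x)) (by
          simpa using (hψ0 x).const_mul c) } 1 (fun x => by
        rw [one_mul, Real.norm_eq_abs]
        exact le_of_tendsto' (hψ0 x).abs fun n => hbd _ x)
    have hψ : ∀ x, ψ x = ψ0 x := fun x => rfl
    have hψa : ∀ i, ψ (a i) = 0 := by
      intro i
      refine tendsto_nhds_unique (hψ0 (a i)) ?_
      refine tendsto_const_nhds.congr' ?_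
      filter_upwards [eventually_gt_atTop i] with n hn
      exact (hf0 (φ n) i (hn.trans_le (hφ.id_le n))).symm
    refine simons_test hsup (fun n => f (φ n) - ψ) (1 + ‖ψ‖) (fun n => ?_) (fun x => ?_) ϑ hϑ a
      (fun n => (ha n).trans one_le_two) (fun n => ?_)
    · exact (norm_sub_le _ _).trans (by linarith [hfn (φ n)])
    · have := (hψ0 x).sub_const (ψ0 x)
      simpa [hψ] using this
    · filter_upwards [eventually_ge_atTop (φ n)] with N hN
      simp only [sub_apply, hψa, sub_zero]
      exact hf1 _ _ hN
  · obtain ⟨F, lam, φ, hdis, hsum, hconv⟩ := hblockcompact (fun i => f (j i)) (fun i => hfn _)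
    let b : ℕ → E →L[ℝ] ℝ := fun n => ∑ i ∈ F n, lam i • f (j i)
    have hbn : ∀ n, ‖b n‖ ≤ 1 := by
      intro n
      refine (norm_sum_le _ _).trans ?_
      rw [← hsum n]
      refine Finset.sum_le_sum fun i _ => ?_
      rw [norm_smul, Real.norm_eq_abs]
      exact mul_le_of_le_one_right (abs_nonneg _) (hfn _)
    -- sign choice
    let σ : ℕ → Bool := fun i =>
      decide ((∃ n, i ∈ F (2*n+1)) ↔ lam i < 0)
    choose x hx using hind σ
    choose y hy using hind (fun i => !(σ i))
    have hpos : ∀ i N, i < N → σ i = true → s - r ≤ f (j i) ((x N).1 - (y N).1) := by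
      intro i N hi h
      have h1 := (hx N i hi).1 h
      have h2 := (hy N i hi).2 (by simp [h])
      rw [map_sub]; linarith
    have hneg : ∀ i N, i < N → σ i = false → f (j i) ((x N).1 - (y N).1) ≤ -(s - r) := by
      intro i N hi h
      have h1 := (hx N i hi).2 h
      have h2 := (hy N i hi).1 (by simp [h])
      rw [map_sub]; linarith
    have hsupp : ∀ n, ∀ᶠ N in atTop, ∀ i ∈ F n, i < N := by
      intro n
      filter_upwards [eventually_gt_atTop ((F n).sup id)] with N hN i hi
      exact (Finset.le_sup (f := id) hi).trans_lt hN
    have hev : ∀ n N, (∀ i ∈ F (2*n), i < N) → s - r ≤ b (2*n) ((x N).1 - (y N).1) := by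
      intro n N hN
      simp only [b, sum_apply, smul_apply, smul_eq_mul]
      have hsr : s - r = ∑ i ∈ F (2*n), |lam i| * (s - r) := by
        rw [← Finset.sum_mul, hsum, one_mul]
      rw [hsr]
      refine Finset.sum_le_sum fun i hi => ?_
      have hno : ¬ ∃ m, i ∈ F (2*m+1) := by
        rintro ⟨m, hm⟩
        exact Finset.disjoint_left.1 (hdis (show 2*n ≠ 2*m+1 by omega)) hi hm
      rcases lt_or_ge (lam i) 0 with hl | hl
      · have := hneg i N (hN i hi) (by simp only [σ]; simp [hno, hl])
        rw [abs_of_neg hl]; nlinarith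
      · have := hpos i N (hN i hi) (by simp only [σ]; simp [hno, hl])
        rw [abs_of_nonneg hl]; nlinarith
    have hod : ∀ n N, (∀ i ∈ F (2*n+1), i < N) →
        b (2*n+1) ((x N).1 - (y N).1) ≤ -(s - r) := by
      intro n N hN
      simp only [b, sum_apply, smul_apply, smul_eq_mul]
      have hsr : -(s - r) = ∑ i ∈ F (2*n+1), -(|lam i| * (s - r)) := by
        rw [Finset.sum_neg_distrib, ← Finset.sum_mul, hsum, one_mul]
      rw [hsr]
      refine Finset.sum_le_sum fun i hi => ?_
      have hyes : ∃ m, i ∈ F (2*m+1) := ⟨n, hi⟩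
      rcases lt_or_ge (lam i) 0 with hl | hl
      · have := hpos i N (hN i hi) (by simp only [σ]; simp [hyes, hl])
        rw [abs_of_neg hl]; nlinarith
      · have := hneg i N (hN i hi) (by simp only [σ]; simp [hyes, hl])
        rw [abs_of_nonneg hl]; nlinarith
    refine simons_test hsup (fun n => b (2*n) - b (2*n+1)) 2 (fun n => ?_) (fun z => ?_)
      (s - r) (sub_pos.2 hrs) (fun N => (x N).1 - (y N).1) (fun N => ?_) (fun n => ?_)
    · exact (norm_sub_le _ _).trans (by linarith [hbn (2*n), hbn (2*n+1)])
    · have t1 : Tendsto (fun n : ℕ => 2*n) atTop atTop :=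
        tendsto_atTop_mono (fun n => by simp only [id]; omega) tendsto_id
      have t2 : Tendsto (fun n : ℕ => 2*n+1) atTop atTop :=
        tendsto_atTop_mono (fun n => by simp only [id]; omega) tendsto_id
      have := ((hconv z).comp t1).sub ((hconv z).comp t2)
      rw [sub_self] at this
      exact this
    · exact (norm_sub_le _ _).trans (by linarith [(x N).2, (y N).2])
    · filter_upwards [hsupp (2*n), hsupp (2*n+1)] with N h1 h2
      have e1 := hev n N h1
      have e2 := hod n N h2
      simp only [sub_apply]
      linarith
end

section
/- Every normed space E in which every continuous linear functional attains its supremum on the closed unit ball is J-reflexive: the closed unit ball contains no sequence (a_n) with inf_n distance(span{a_i : i < n}, conv{a_i : i ≥ n}) > 0. (Assume Hahn–Banach and Dependent Choices.) -/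
open Filter Topology

section JamesAux

variable {E : Type*} [NormedAddCommGroup E] [NormedSpace ℝ E]

/-- Witnessed form of near equality of `sup (d - limsup f)` and `sup (d - liminf f)`. -/
def JWit (f : ℕ → (E →L[ℝ] ℝ)) (L : Filter ℕ) (d : E →L[ℝ] ℝ) (ε : ℝ) (x : E) (c : ℝ) : Prop :=
  ‖x‖ ≤ 1 ∧ (∀ᶠ n in L, c - ε ≤ d x - f n x) ∧
    ∀ y : E, ‖y‖ ≤ 1 → ∀ᶠ n in L, d y - f n y ≤ c + ε

theorem JWit.mono {f : ℕ → (E →L[ℝ] ℝ)} {L L' : Filter ℕ} {d : E →L[ℝ] ℝ} {ε : ℝ} {x : E} {c : ℝ}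
    (h : JWit f L d ε x c) (hL : L' ≤ L) : JWit f L' d ε x c :=
  ⟨h.1, h.2.1.filter_mono hL, fun y hy => (h.2.2 y hy).filter_mono hL⟩

theorem apply_le_of_ball {f : E →L[ℝ] ℝ} {M : ℝ} (hf : ‖f‖ ≤ M) {x : E} (hx : ‖x‖ ≤ 1) :
    |f x| ≤ M := by
  have := f.le_opNorm x
  rw [Real.norm_eq_abs] at this
  have h2 : ‖f‖ * ‖x‖ ≤ ‖f‖ * 1 := by gcongr
  linarith

theorem norm_le_of_ball {f : E →L[ℝ] ℝ} {M : ℝ} (hf : ∀ x : E, ‖x‖ ≤ 1 → f x ≤ M) : ‖f‖ ≤ M := by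
  have hM : 0 ≤ M := by simpa using hf 0 (by simp)
  refine ContinuousLinearMap.opNorm_le_of_unit_norm hM fun x hx => ?_
  rw [Real.norm_eq_abs, abs_le]
  have h1 := hf x hx.le
  have h2 := hf (-x) (by simpa using hx.le)
  rw [map_neg] at h2
  constructor <;> linarith

theorem JWit.perturb {f : ℕ → (E →L[ℝ] ℝ)} {L : Filter ℕ} {d d' : E →L[ℝ] ℝ} {ε : ℝ} {x : E}
    {c : ℝ} (h : JWit f L d ε x c) (hd : ‖d - d'‖ ≤ ε) : JWit f L d' (2 * ε) x c := by
  refine ⟨h.1, ?_, fun y hy => ?_⟩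
  · have := abs_le.1 (apply_le_of_ball hd h.1)
    simp only [_root_.sub_apply] at this
    filter_upwards [h.2.1] with n hn
    linarith
  · have := abs_le.1 (apply_le_of_ball hd hy)
    simp only [_root_.sub_apply] at this
    filter_upwards [h.2.2 y hy] with n hn
    linarith

theorem JWit.norm_le {f : ℕ → (E →L[ℝ] ℝ)} {d w : E →L[ℝ] ℝ} {ε : ℝ} {x : E}
    {c : ℝ} (h : JWit f atTop d ε x c) {U : Filter ℕ} [U.NeBot] (hU : U ≤ atTop)
    (hw : ∀ y, Tendsto (fun n => f n y) U (𝓝 (w y))) :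
    c - ε ≤ ‖d - w‖ ∧ ‖d - w‖ ≤ c + ε := by
  constructor
  · have h1 : c - ε ≤ d x - w x :=
      ge_of_tendsto (tendsto_const_nhds.sub (hw x)) (h.2.1.filter_mono hU)
    have h2 := abs_le.1 (apply_le_of_ball (le_refl ‖d - w‖) h.1)
    simp only [_root_.sub_apply] at h2
    linarith
  · refine norm_le_of_ball fun y hy => ?_
    exact le_of_tendsto (tendsto_const_nhds.sub (hw y)) ((h.2.2 y hy).filter_mono hU)

theorem JWit.block {h g : ℕ → (E →L[ℝ] ℝ)} {d : E →L[ℝ] ℝ} {ε : ℝ} {x : E}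
    {c : ℝ} (H : JWit h atTop d ε x c) (hg : ∀ n, g n ∈ convexHull ℝ (h '' {k | n ≤ k})) :
    JWit g atTop d ε x c := by
  refine ⟨H.1, ?_, fun y hy => ?_⟩
  · obtain ⟨N, hN⟩ := eventually_atTop.1 H.2.1
    filter_upwards [eventually_ge_atTop N] with n hn
    have : convexHull ℝ (h '' {k | n ≤ k}) ⊆ {φ | φ x ≤ d x - (c - ε)} := by
      refine convexHull_min ?_ ?_
      · rintro _ ⟨k, hk, rfl⟩
        have := hN k (hn.trans hk)
        simp only [Set.mem_ofPred_eq]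
        linarith
      · intro p hp q hq a b ha hb hab
        simp only [Set.mem_ofPred_eq, _root_.add_apply, _root_.smul_apply,
          smul_eq_mul] at *
        obtain rfl : b = 1 - a := by linarith
        nlinarith
    have := this (hg n)
    simp only [Set.mem_ofPred_eq] at this
    linarith
  · obtain ⟨N, hN⟩ := eventually_atTop.1 (H.2.2 y hy)
    filter_upwards [eventually_ge_atTop N] with n hn
    have : convexHull ℝ (h '' {k | n ≤ k}) ⊆ {φ | d y - (c + ε) ≤ φ y} := by
      refine convexHull_min ?_ ?_
      · rintro _ ⟨k, hk, rfl⟩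
        have := hN k (hn.trans hk)
        simp only [Set.mem_ofPred_eq]
        linarith
      · intro p hp q hq a b ha hb hab
        simp only [Set.mem_ofPred_eq, _root_.add_apply, _root_.smul_apply,
          smul_eq_mul] at *
        obtain rfl : b = 1 - a := by linarith
        nlinarith
    have := this (hg n)
    simp only [Set.mem_ofPred_eq] at this
    linarith

theorem pryce_step {f : ℕ → (E →L[ℝ] ℝ)} {M : ℝ} (hf : ∀ n, ‖f n‖ ≤ M) (A : Set ℕ)
    (hA : ∃ᶠ n in atTop, n ∈ A) (d : E →L[ℝ] ℝ) {ε : ℝ} (hε : 0 < ε) :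
    ∃ A' : Set ℕ, A' ⊆ A ∧ (∃ᶠ n in atTop, n ∈ A') ∧ ∃ x c, JWit f (atTop ⊓ 𝓟 A') d ε x c := by
  have hne : (atTop ⊓ 𝓟 A).NeBot := frequently_mem_iff_neBot.1 hA
  set S : Set ℝ := {c | ∀ y : E, ‖y‖ ≤ 1 → ∀ᶠ n in atTop ⊓ 𝓟 A, d y - f n y ≤ c} with hS
  have hbound : ∀ y : E, ‖y‖ ≤ 1 → ∀ n, |d y - f n y| ≤ ‖d‖ + M := by
    intro y hy n
    have h1 := abs_le.1 (apply_le_of_ball (le_refl ‖d‖) hy)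
    have h2 := abs_le.1 (apply_le_of_ball (hf n) hy)
    rw [abs_le]
    constructor <;> linarith
  have hSne : S.Nonempty := ⟨‖d‖ + M, fun y hy => Eventually.of_forall fun n =>
    (abs_le.1 (hbound y hy n)).2⟩
  have hSb : BddBelow S := by
    refine ⟨0, fun c hc => ?_⟩
    obtain ⟨n, hn⟩ := (hc 0 (by simp)).exists
    simpa using hn
  obtain ⟨c', hc', hlt⟩ := exists_lt_of_csInf_lt hSne (lt_add_of_pos_right (sInf S) hε)
  have hnot : sInf S - ε ∉ S := fun h => by
    have := csInf_le hSb h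
    linarith
  simp only [hS, Set.mem_ofPred_eq, not_forall] at hnot
  obtain ⟨x, hx, hnx⟩ := hnot
  rw [← hS] at hnx
  refine ⟨{n | n ∈ A ∧ sInf S - ε ≤ d x - f n x}, fun n hn => hn.1, ?_, x, sInf S, hx, ?_, ?_⟩
  · rw [not_eventually, frequently_inf_principal] at hnx
    exact hnx.mono fun n hn => ⟨hn.1, (not_le.1 hn.2).le⟩
  · exact (eventually_principal.2 fun n hn => hn.2).filter_mono inf_le_right
  · intro y hy
    have h1 : ∀ᶠ n in atTop ⊓ 𝓟 A, d y - f n y ≤ sInf S + ε :=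
      (hc' y hy).mono fun n hn => hn.trans hlt.le
    exact h1.filter_mono (inf_le_inf_left _ (principal_mono.2 fun n hn => hn.1))

theorem pryce {f : ℕ → (E →L[ℝ] ℝ)} {M : ℝ} (hf : ∀ n, ‖f n‖ ≤ M) (T : Set (E →L[ℝ] ℝ))
    (hT : TopologicalSpace.IsSeparable T) :
    ∃ φ : ℕ → ℕ, StrictMono φ ∧ ∀ d ∈ T, ∀ ε > 0, ∃ x c, JWit (f ∘ φ) atTop d ε x c := by
  obtain ⟨D0, hD0, hTD⟩ := hT
  obtain ⟨D, hD⟩ := (hD0.insert 0).exists_eq_range (Set.insert_nonempty _ _)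
  have hstep : ∀ (m : ℕ) (A : {A : Set ℕ // ∃ᶠ n in atTop, n ∈ A}),
      ∃ A' : {A : Set ℕ // ∃ᶠ n in atTop, n ∈ A}, A'.1 ⊆ A.1 ∧ ∃ x c,
        JWit f (atTop ⊓ 𝓟 A'.1) (D (Nat.unpair m).1) (1 / ((Nat.unpair m).2 + 1 : ℝ)) x c := by
    intro m A
    obtain ⟨A', h1, h2, h3⟩ := pryce_step hf A.1 A.2 (D (Nat.unpair m).1)
      (ε := 1 / ((Nat.unpair m).2 + 1 : ℝ)) (by positivity)
    exact ⟨⟨A', h2⟩, h1, h3⟩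
  choose st hst1 hst2 using hstep
  let A : ℕ → {A : Set ℕ // ∃ᶠ n in atTop, n ∈ A} := fun m =>
    Nat.rec ⟨Set.univ, by simpa using (Frequently.of_forall fun _ => trivial)⟩ (fun k B => st k B) m
  have hAs : ∀ m, A (m + 1) = st m (A m) := fun m => rfl
  have hanti : Antitone fun m => (A m).1 := antitone_nat_of_succ_le fun m => hst1 m (A m)
  obtain ⟨φ, hφ, hφA⟩ := extraction_forall_of_frequently (P := fun m k => k ∈ (A (m + 1)).1)
    (fun m => (A (m + 1)).2)
  refine ⟨φ, hφ, fun d hd ε hε => ?_⟩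
  have hle : ∀ m, map φ atTop ≤ atTop ⊓ 𝓟 (A (m + 1)).1 := by
    intro m
    refine le_inf hφ.tendsto_atTop ?_
    rw [le_principal_iff, mem_map]
    filter_upwards [eventually_ge_atTop m] with k hk
    exact hanti (Nat.succ_le_succ hk) (hφA k)
  obtain ⟨k, hk⟩ := exists_nat_one_div_lt (half_pos hε)
  have hkp : (0 : ℝ) < 1 / ((k : ℝ) + 1) := by positivity
  obtain ⟨d', hd', hdd⟩ := Metric.mem_closure_iff.1 (hTD hd) _ hkp
  obtain ⟨i, hi⟩ : d' ∈ Set.range D := hD ▸ Set.mem_insert_of_mem _ hd'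
  obtain ⟨x, c, hxc⟩ := hst2 (Nat.pair i k) (A (Nat.pair i k))
  rw [← hAs] at hxc
  have h1 := hxc.mono (hle _)
  simp only [Nat.unpair_pair] at h1
  rw [hi] at h1
  have h2 : JWit f (map φ atTop) d (2 * (1 / ((k : ℝ) + 1))) x c := by
    refine h1.perturb ?_
    rw [dist_comm, dist_eq_norm] at hdd
    exact hdd.le
  refine ⟨x, c, h2.1, ?_, fun y hy => ?_⟩
  · exact (eventually_map.1 h2.2.1).mono fun n hn => by
      simp only [Function.comp]; linarith
  · exact (eventually_map.1 (h2.2.2 y hy)).mono fun n hn => by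
      simp only [Function.comp]; linarith

theorem exists_ultralimit {f : ℕ → (E →L[ℝ] ℝ)} {M : ℝ} (hf : ∀ n, ‖f n‖ ≤ M) :
    ∃ w : E →L[ℝ] ℝ, ‖w‖ ≤ M ∧ ∀ y, Tendsto (fun n => f n y) (hyperfilter ℕ : Filter ℕ) (𝓝 (w y)) := by
  have hc := WeakDual.isCompact_closedBall (𝕜 := ℝ) (E := E) 0 M
  let F : ℕ → WeakDual ℝ E := fun n => StrongDual.toWeakDual (f n)
  obtain ⟨w, hw, hlim⟩ := hc.ultrafilter_le_nhds ((hyperfilter ℕ).map F) (by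
    rw [le_principal_iff]
    refine Eventually.of_forall (f := (hyperfilter ℕ : Filter ℕ)) fun n => ?_
    simpa [F] using hf n)
  refine ⟨WeakDual.toStrongDual w, by simpa using hw, fun y => ?_⟩
  exact ((WeakDual.eval_continuous y).tendsto w).comp (show Tendsto F _ _ from hlim)

theorem exists_sep {a : ℕ → E} {θ : ℝ} (hθ : 0 < θ) (n : ℕ)
    (h : ∀ x ∈ (Submodule.span ℝ (a '' {i | i < n}) : Set E),
        ∀ y ∈ convexHull ℝ (a '' {i | n ≤ i}), θ ≤ ‖x - y‖) :
    ∃ f : E →L[ℝ] ℝ, ‖f‖ ≤ 1 / θ ∧ (∀ i < n, f (a i) = 0) ∧ ∀ i, n ≤ i → 1 ≤ f (a i) := by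
  let S : Set E := (Submodule.span ℝ (a '' {i | i < n}) : Set E)
  let C : Set E := convexHull ℝ (a '' {i | n ≤ i})
  have hSc : Convex ℝ S := Submodule.convex _
  have hC : Convex ℝ C := convex_convexHull _ _
  obtain ⟨f, u, hf1, hf2⟩ := geometric_hahn_banach_open (convex_ball (0 : E) θ) Metric.isOpen_ball
    (hC.sub hSc) (by
      rw [Set.disjoint_left]
      rintro z hz ⟨y, hy, x, hx, rfl⟩
      have := h x hx y hy
      rw [mem_ball_zero_iff, norm_sub_rev] at hz
      linarith)
  have hu : 0 < u := by simpa using hf1 0 (by simpa using hθ)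
  have h2 : ∀ y ∈ C, ∀ x ∈ S, u ≤ f y - f x := fun y hy x hx => by
    rw [← map_sub]; exact hf2 _ (Set.sub_mem_sub hy hx)
  refine ⟨u⁻¹ • f, ?_, fun i hi => ?_, fun i hi => ?_⟩
  · refine norm_le_of_ball fun x hx => ?_
    have key : ∀ r : ℝ, 0 < r → r < θ → r * f x ≤ u := by
      intro r hr hrθ
      have := hf1 (r • x) (by
        rw [mem_ball_zero_iff, norm_smul, Real.norm_eq_abs, abs_of_pos hr]
        nlinarith [norm_nonneg x])
      rw [map_smul, smul_eq_mul] at this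
      exact this.le
    have hlim : θ * f x ≤ u := by
      have ht : Tendsto (fun r : ℝ => r * f x) (𝓝[<] θ) (𝓝 (θ * f x)) :=
        (tendsto_id.mul_const _).mono_left nhdsWithin_le_nhds
      refine le_of_tendsto ht ?_
      filter_upwards [Ioo_mem_nhdsLT hθ] with r hr
      exact key r hr.1 hr.2
    simp only [_root_.smul_apply, smul_eq_mul]
    rw [inv_mul_eq_div, div_le_div_iff₀ hu hθ]
    linarith
  · have hai : a i ∈ Submodule.span ℝ (a '' {i | i < n}) :=
      Submodule.subset_span ⟨i, hi, rfl⟩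
    have hy : a n ∈ C := subset_convexHull _ _ ⟨n, le_refl n, rfl⟩
    have h3 : ∀ t : ℝ, u ≤ f (a n) - t * f (a i) := fun t => by
      have := h2 _ hy (t • a i) (Submodule.smul_mem _ _ hai)
      rwa [map_smul, smul_eq_mul] at this
    have h4 : f (a i) = 0 := by
      by_contra hne
      have := h3 (f (a n) / f (a i))
      rw [div_mul_cancel₀ _ hne] at this
      linarith
    simp [h4]
  · have := h2 (a i) (subset_convexHull _ _ ⟨i, hi, rfl⟩) 0 (Submodule.zero_mem _)
    simp only [map_zero, sub_zero] at this
    simp only [_root_.smul_apply, smul_eq_mul]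
    rw [inv_mul_eq_div, le_div_iff₀ hu]
    linarith

theorem simons_core {h : ℕ → (E →L[ℝ] ℝ)} {M : ℝ} (hM : 0 < M) (hh : ∀ n, ‖h n‖ ≤ M)
    (hsup : ∀ f : E →L[ℝ] ℝ, ∃ x : E, ‖x‖ ≤ 1 ∧ ∀ y : E, ‖y‖ ≤ 1 → f y ≤ f x)
    {w0 : E →L[ℝ] ℝ}
    (hlow : ∀ d ∈ convexHull ℝ (Set.range h), 1 ≤ ‖d - w0‖)
    (hst : ∀ g : ℕ → (E →L[ℝ] ℝ), (∀ n, g n ∈ convexHull ℝ (h '' {k | n ≤ k})) →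
      ∀ w : E →L[ℝ] ℝ, (∀ y, Tendsto (fun n => g n y) (hyperfilter ℕ : Filter ℕ) (𝓝 (w y))) →
      ∀ d ∈ closure (Submodule.span ℝ (Set.range h) : Set (E →L[ℝ] ℝ)), ‖d - w‖ = ‖d - w0‖) :
    False := by
  obtain ⟨l, hl0, hl1, hlM⟩ : ∃ l : ℝ, 0 < l ∧ l < 1 ∧ 2 * M * l ≤ 1 / 4 := by
    refine ⟨min (1 / 2) (1 / (8 * M)), by positivity, by
      have := min_le_left (1 / 2 : ℝ) (1 / (8 * M)); linarith, ?_⟩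
    calc 2 * M * min (1 / 2) (1 / (8 * M)) ≤ 2 * M * (1 / (8 * M)) := by
          gcongr; exact min_le_right _ _
      _ = 1 / 4 := by field_simp; norm_num
  let C : ℕ → Set (E →L[ℝ] ℝ) := fun n => convexHull ℝ (h '' {k | n ≤ k})
  have hCc : ∀ n, Convex ℝ (C n) := fun n => convex_convexHull _ _
  have hCanti : Antitone C := fun m n hmn =>
    convexHull_mono (Set.image_mono fun k hk => le_trans hmn hk)
  have hCne : ∀ n, h n ∈ C n := fun n => subset_convexHull _ _ ⟨n, le_refl n, rfl⟩
  have hCM : ∀ n, ∀ u ∈ C n, ‖u‖ ≤ M := by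
    intro n u hu
    have : C n ⊆ Metric.closedBall 0 M := by
      refine convexHull_min ?_ (convex_closedBall _ _)
      rintro _ ⟨k, _, rfl⟩
      simpa using hh k
    simpa using this hu
  have hCr : ∀ n, C n ⊆ convexHull ℝ (Set.range h) := fun n =>
    convexHull_mono (Set.image_subset_range _ _)
  have hCs : ∀ n, ∀ u ∈ C n, u ∈ Submodule.span ℝ (Set.range h) := by
    intro n u hu
    exact convexHull_min Submodule.subset_span (Submodule.convex _) (hCr n hu)
  let e : ℕ → ℝ := fun n => l ^ (n + 1) * (1 / 4) * (1 / 2) ^ n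
  have he : ∀ n, 0 < e n := fun n => by positivity
  have hsel : ∀ (n : ℕ) (s : E →L[ℝ] ℝ), ∃ g ∈ C n, ∀ u ∈ C n,
      ‖s + l ^ n • g - w0‖ ≤ ‖s + l ^ n • u - w0‖ + e n := by
    intro n s
    let V : Set ℝ := (fun u => ‖s + l ^ n • u - w0‖) '' C n
    have hVb : BddBelow V := ⟨0, by rintro _ ⟨u, _, rfl⟩; exact norm_nonneg _⟩
    obtain ⟨_, ⟨g, hg, rfl⟩, hlt⟩ := exists_lt_of_csInf_lt
      (⟨_, h n, hCne n, rfl⟩ : V.Nonempty) (lt_add_of_pos_right (sInf V) (he n))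
    refine ⟨g, hg, fun u hu => ?_⟩
    have := csInf_le hVb ⟨u, hu, rfl⟩
    linarith
  choose G hGC hG using hsel
  let s : ℕ → (E →L[ℝ] ℝ) := fun n =>
    Nat.rec 0 (fun k σ => σ + ((1 - l) * l ^ k) • G k σ) n
  let g : ℕ → (E →L[ℝ] ℝ) := fun n => G n (s n)
  have hs0 : s 0 = 0 := rfl
  have hss : ∀ n, s (n + 1) = s n + ((1 - l) * l ^ n) • g n := fun n => rfl
  have hgC : ∀ n, g n ∈ C n := fun n => hGC n (s n)
  have hgmin : ∀ n, ∀ u ∈ C n, ‖s n + l ^ n • g n - w0‖ ≤ ‖s n + l ^ n • u - w0‖ + e n :=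
    fun n => hG n (s n)
  have hgM : ∀ n, ‖g n‖ ≤ M := fun n => hCM n _ (hgC n)
  -- re-expressing later sums
  have hre : ∀ n k, ∀ v ∈ C n, ∃ u ∈ C n, s (n + k) + l ^ (n + k) • v = s n + l ^ n • u := by
    intro n k
    induction k with
    | zero => exact fun v hv => ⟨v, hv, rfl⟩
    | succ k ih =>
      intro v hv
      obtain ⟨u, hu, hue⟩ := ih ((1 - l) • g (n + k) + l • v)
        (hCc n (hCanti (Nat.le_add_right n k) (hgC (n + k))) hv (by linarith) hl0.le (by ring))
      refine ⟨u, hu, ?_⟩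
      rw [← hue, ← add_assoc, hss, pow_succ]
      module
  have hdist : ∀ n, dist (s n) (s (n + 1)) ≤ ((1 - l) * M) * l ^ n := by
    intro n
    rw [dist_comm, dist_eq_norm, hss, add_sub_cancel_left, norm_smul, Real.norm_eq_abs,
      abs_of_nonneg (mul_nonneg (by linarith) (by positivity))]
    have : (1 - l) * l ^ n * ‖g n‖ ≤ (1 - l) * l ^ n * M := by
      have := hgM n
      have h1 : 0 ≤ (1 - l) * l ^ n := mul_nonneg (by linarith) (by positivity)
      gcongr
    linarith
  obtain ⟨F, hF⟩ := cauchySeq_tendsto_of_complete (cauchySeq_of_le_geometric l _ hl1 hdist)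
  have hFd : ∀ n, ‖F - s n‖ ≤ M * l ^ n := by
    intro n
    have := dist_le_of_le_geometric_of_tendsto l _ hl1 hdist hF n
    rw [dist_comm, dist_eq_norm] at this
    refine this.trans (le_of_eq ?_)
    have : (1 - l) ≠ 0 := by linarith
    field_simp
  have hlim : Tendsto (fun n => s n + l ^ n • g n) atTop (𝓝 F) := by
    have h0 : Tendsto (fun n => l ^ n • g n) atTop (𝓝 0) := by
      refine squeeze_zero_norm (a := fun n => l ^ n * M) (fun n => ?_) ?_
      · rw [norm_smul, norm_pow, Real.norm_eq_abs, abs_of_pos hl0]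
        have := hgM n
        gcongr
      · simpa using (tendsto_pow_atTop_nhds_zero_of_lt_one hl0.le hl1).mul_const M
    simpa using hF.add h0
  have hsspan : ∀ n, s n ∈ Submodule.span ℝ (Set.range h) := by
    intro n
    induction n with
    | zero => exact Submodule.zero_mem _
    | succ n ih =>
      rw [hss]
      exact Submodule.add_mem _ ih (Submodule.smul_mem _ _ (hCs n _ (hgC n)))
  have huspan : ∀ n, s n + l ^ n • g n ∈ Submodule.span ℝ (Set.range h) := fun n =>
    Submodule.add_mem _ (hsspan n) (Submodule.smul_mem _ _ (hCs n _ (hgC n)))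
  have hFcl : F ∈ closure (Submodule.span ℝ (Set.range h) : Set (E →L[ℝ] ℝ)) :=
    mem_closure_of_tendsto hF (Eventually.of_forall hsspan)
  have hle : ∀ n, ‖s n + l ^ n • g n - w0‖ ≤ ‖F - w0‖ + e n := by
    intro n
    refine ge_of_tendsto ((hlim.sub_const w0).norm.add_const (e n)) ?_
    filter_upwards [eventually_ge_atTop n] with N hN
    obtain ⟨k, rfl⟩ := Nat.exists_eq_add_of_le hN
    obtain ⟨u, hu, hue⟩ := hre n k (g (n + k)) (hCanti (Nat.le_add_right n k) (hgC (n + k)))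
    rw [hue]
    exact hgmin n u hu
  have hFlow : 1 ≤ ‖F - w0‖ := by
    refine ge_of_tendsto (hlim.sub_const w0).norm (Eventually.of_forall fun N => ?_)
    obtain ⟨u, hu, hue⟩ := hre 0 N (g N) (hCanti (Nat.zero_le N) (hgC N))
    rw [zero_add, hs0, pow_zero, one_smul, zero_add] at hue
    rw [hue]
    exact hlow u (hCr 0 hu)
  obtain ⟨w, hwM, hw⟩ := exists_ultralimit hgM
  have hstw := hst g hgC w hw
  obtain ⟨x, hx, hmax⟩ := hsup (F - w)
  have hxα : ‖F - w‖ ≤ F x - w x := norm_le_of_ball hmax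
  rw [hstw F hFcl] at hxα
  -- the tails at `x`
  let t : ℕ → ℝ := fun n => F x - s n x - l ^ n * w x
  have htdef : ∀ n, t n = F x - s n x - l ^ n * w x := fun n => rfl
  have hts : ∀ n, t (n + 1) = t n - (1 - l) * l ^ n * (g n x - w x) := by
    intro n
    rw [htdef (n + 1), htdef n, hss, _root_.add_apply, _root_.smul_apply,
      smul_eq_mul, pow_succ]
    ring
  have ht_up : ∀ n, t n ≤ 2 * M * l ^ n := by
    intro n
    have h1 := abs_le.1 (apply_le_of_ball (hFd n) hx)
    have h2 := abs_le.1 (apply_le_of_ball hwM hx)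
    rw [_root_.sub_apply] at h1
    have h3 : 0 < l ^ n := by positivity
    rw [htdef]
    nlinarith
  have ht_rec : ∀ n, l * t n - (1 - l) * e n ≤ t (n + 1) := by
    intro n
    have h1 : ‖s n + l ^ n • g n - w‖ ≤ ‖F - w0‖ + e n := by
      rw [hstw _ (subset_closure (huspan n))]; exact hle n
    have h2 := (abs_le.1 (apply_le_of_ball h1 hx)).2
    simp only [_root_.add_apply, _root_.sub_apply,
      _root_.smul_apply, smul_eq_mul] at h2
    have h3 : l ^ n * (g n x - w x) ≤ t n + e n := by rw [htdef]; nlinarith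
    rw [hts]
    nlinarith
  have ht_low : ∀ n, l ^ n * (1 / 2) * (1 + (1 / 2) ^ n) ≤ t n := by
    intro n
    induction n with
    | zero =>
      rw [htdef, hs0]
      simp only [pow_zero, _root_.zero_apply]
      linarith
    | succ n ih =>
      refine le_trans ?_ (ht_rec n)
      have h1 : l * (l ^ n * (1 / 2) * (1 + (1 / 2) ^ n)) ≤ l * t n := by gcongr
      have h2 : (1 - l) * e n ≤ e n := by nlinarith [he n]
      have h3 : l ^ (n + 1) * (1 / 2) * (1 + (1 / 2) ^ (n + 1))
        = l * (l ^ n * (1 / 2) * (1 + (1 / 2) ^ n)) - e n := by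
        simp only [e, pow_succ]; ring
      linarith
  have hfin : ∀ n, w x + 1 / 4 ≤ g n x := by
    intro n
    have h1 := ht_low n
    have h2 := ht_up (n + 1)
    rw [hts] at h2
    have hp : 0 < l ^ n := by positivity
    have h4 : l ^ n * (1 / 2) ≤ t n := by
      refine le_trans ?_ h1
      have : (0 : ℝ) < (1 / 2) ^ n := by positivity
      nlinarith [mul_pos hp this]
    have h5 : l ^ n * (1 / 4) ≤ l ^ n * ((1 - l) * (g n x - w x)) := by
      have : 2 * M * l ^ (n + 1) ≤ l ^ n * (1 / 4) := by
        rw [pow_succ]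
        nlinarith
      linarith
    have h6 := le_of_mul_le_mul_left h5 hp
    by_contra hcon
    push Not at hcon
    by_cases h7 : 0 ≤ g n x - w x
    · nlinarith
    · nlinarith
  have := ge_of_tendsto (hw x) (Eventually.of_forall hfin)
  linarith

end JamesAux

/-- James' sup theorem: every sup-reflexive normed space is J-reflexive. -/
theorem james_sup_theorem {E : Type*} [NormedAddCommGroup E] [NormedSpace ℝ E]
    (hsup : ∀ f : E →L[ℝ] ℝ, ∃ x : E, ‖x‖ ≤ 1 ∧ ∀ y : E, ‖y‖ ≤ 1 → f y ≤ f x) :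
    ¬ ∃ (a : ℕ → E) (ϑ : ℝ), 0 < ϑ ∧ (∀ n, ‖a n‖ ≤ 1) ∧
      ∀ n : ℕ, ∀ x ∈ (Submodule.span ℝ (a '' {i | i < n}) : Set E),
        ∀ y ∈ convexHull ℝ (a '' {i | n ≤ i}), ϑ ≤ ‖x - y‖ := by
  rintro ⟨a, θ, hθ, ha, hsep⟩
  choose f hfM hf0 hf1 using fun n => exists_sep hθ n (hsep n)
  have hsepT : TopologicalSpace.IsSeparable
      (closure (Submodule.span ℝ (Set.range f) : Set (E →L[ℝ] ℝ))) :=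
    ((Set.countable_range f).isSeparable.span).closure
  obtain ⟨φ, hφ, hP⟩ := pryce hfM _ hsepT
  have hhM : ∀ n, ‖(f ∘ φ) n‖ ≤ 1 / θ := fun n => hfM _
  obtain ⟨w0, _, hw0⟩ := exists_ultralimit hhM
  have hw0a : ∀ i, w0 (a i) = 0 := by
    intro i
    refine tendsto_nhds_unique (hw0 (a i)) (tendsto_const_nhds.congr' ?_)
    refine Eventually.filter_mono Nat.hyperfilter_le_atTop ?_
    filter_upwards [eventually_gt_atTop i] with n hn
    exact (hf0 (φ n) i (lt_of_lt_of_le hn hφ.le_apply)).symm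
  refine simons_core (h := f ∘ φ) (by positivity) hhM hsup (w0 := w0) ?_ ?_
  · intro d hd
    have : convexHull ℝ (Set.range (f ∘ φ)) ⊆ {d | ∃ K, ∀ i, K ≤ i → 1 ≤ d (a i)} := by
      refine convexHull_min ?_ ?_
      · rintro _ ⟨k, rfl⟩
        exact ⟨φ k, fun i hi => hf1 _ i hi⟩
      · rintro p ⟨K, hK⟩ q ⟨K', hK'⟩ s t hs ht hst
        refine ⟨max K K', fun i hi => ?_⟩
        have h1 := hK i (le_trans (le_max_left _ _) hi)
        have h2 := hK' i (le_trans (le_max_right _ _) hi)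
        simp only [_root_.add_apply, _root_.smul_apply, smul_eq_mul]
        nlinarith
    obtain ⟨K, hK⟩ := this hd
    have h1 := hK K le_rfl
    have h2 := (abs_le.1 (apply_le_of_ball (le_refl ‖d - w0‖) (ha K))).2
    rw [_root_.sub_apply, hw0a] at h2
    linarith
  · intro g hg w hw d hd
    have hd' : d ∈ closure (Submodule.span ℝ (Set.range f) : Set (E →L[ℝ] ℝ)) :=
      closure_mono (Submodule.span_mono (Set.range_comp_subset_range φ f)) hd
    have key : ∀ ε > 0, |‖d - w‖ - ‖d - w0‖| ≤ 2 * ε := by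
      intro ε hε
      obtain ⟨x, c, hxc⟩ := hP d hd' ε hε
      have h1 := hxc.norm_le Nat.hyperfilter_le_atTop hw0
      have h2 := (hxc.block hg).norm_le Nat.hyperfilter_le_atTop hw
      rw [abs_le]
      constructor <;> linarith [h1.1, h1.2, h2.1, h2.2]
    by_contra hne
    have hpos : 0 < |‖d - w‖ - ‖d - w0‖| := abs_pos.2 (sub_ne_zero.2 hne)
    have := key _ (by linarith : 0 < |‖d - w‖ - ‖d - w0‖| / 4)
    linarith
end
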